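/- arXiv:1209.2218 — 3 statements merged into one kernel-verified Lean document; each statement's English description precedes it below -/
import Mathlib

section
/- Every forest T on n ≥ 1 vertices has product dimension at most 1.441 log₂ n + 3. -/
/-- `φ : V → Fin l → ℕ` is an `l`-encoding of `G`. -/
def IsEncoding {V : Type*} (G : SimpleGraph V) (l : ℕ) (φ : V → Fin l → ℕ) : Prop :=
  Function.Injective φ ∧ ∀ u v : V, u ≠ v → (G.Adj u v ↔ ∀ i, φ u i ≠ φ v i)

/-- The product dimension of a graph. -/
noncomputable def pdim {V : Type*} (G : SimpleGraph V) : ℕ :=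
  sInf {l | ∃ φ : V → Fin l → ℕ, IsEncoding G l φ}

namespace PdimForest

/-- `l` coordinates suffice to represent adjacency between opposite sides inside `S`. -/
def Good {V : Type*} (G : SimpleGraph V) (side : V → Bool) (S : Finset V) (l : ℕ) : Prop :=
  ∃ φ : V → Fin l → ℕ, ∀ x ∈ S, ∀ y ∈ S, side x ≠ side y →
    (G.Adj x y ↔ ∀ i, φ x i ≠ φ y i)

/-- The graph induced on `S` minus `v`, seen as a graph on `V`. -/
def del {V : Type*} (G : SimpleGraph V) (S : Finset V) (v : V) : SimpleGraph V where
  Adj x y := G.Adj x y ∧ x ∈ S ∧ y ∈ S ∧ x ≠ v ∧ y ≠ v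
  symm := ⟨fun _ _ h => ⟨h.1.symm, h.2.2.1, h.2.1, h.2.2.2.2, h.2.2.2.1⟩⟩
  loopless := ⟨fun _ h => h.1.ne rfl⟩

open Classical in
/-- The component of `x` in `S` minus `v`. -/
noncomputable def cmp {V : Type*} (G : SimpleGraph V) (S : Finset V) (v x : V) : Finset V :=
  (S.erase v).filter (fun y => (del G S v).Reachable x y)

lemma mono {V : Type*} {G : SimpleGraph V} {side : V → Bool} {S : Finset V} {l : ℕ}
    (h : Good G side S l) : Good G side S (l + 1) := by
  obtain ⟨φ, hφ⟩ := h
  refine ⟨fun x => Fin.cons (if side x then 1 else 0) (φ x), ?_⟩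
  intro x hx y hy hxy
  rw [hφ x hx y hy hxy, Fin.forall_fin_succ]
  simp only [Fin.cons_zero, Fin.cons_succ]
  constructor
  · intro h
    refine ⟨?_, h⟩
    revert hxy
    cases side x <;> cases side y <;> simp
  · exact fun h => h.2

lemma mono_le {V : Type*} {G : SimpleGraph V} {side : V → Bool} {S : Finset V} {l l' : ℕ}
    (h : Good G side S l) (hl : l ≤ l') : Good G side S l' := by
  induction hl with
  | refl => exact h
  | step _ ih => exact mono ih

lemma ren_iff (a b c : ℕ) :
    ((if a = c then 0 else a + 1) ≠ (if b = c then 0 else b + 1)) ↔ a ≠ b := by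
  grind

open Classical in
lemma glue {V : Type*} {G : SimpleGraph V} {side : V → Bool} {A B : Finset V} {v : V} {l : ℕ}
    (hvA : v ∉ A) (hvB : v ∉ B) (hAB : Disjoint A B)
    (hno : ∀ a ∈ A, ∀ b ∈ B, ¬ G.Adj a b)
    (hA : Good G side (insert v A) l) (hB : Good G side (insert v B) l) :
    Good G side (insert v (A ∪ B)) (l + 1) := by
  obtain ⟨α, hα⟩ := hA
  obtain ⟨β, hβ⟩ := hB
  let ψ : V → Fin l → ℕ := fun x i =>
    if x ∈ A then (if α x i = α v i then 0 else α x i + 1)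
    else (if β x i = β v i then 0 else β x i + 1)
  let c : V → ℕ := fun x => if x ∈ A then (if side x then 1 else 0)
    else if x ∈ B then (if side x then 0 else 1) else 2
  have hψA : ∀ x ∈ insert v A, ∀ i, ψ x i = (if α x i = α v i then 0 else α x i + 1) := by
    intro x hx i
    rcases Finset.mem_insert.1 hx with rfl | hx
    · simp [ψ, hvA]
    · simp [ψ, hx]
  have hψB : ∀ x ∈ insert v B, ∀ i, ψ x i = (if β x i = β v i then 0 else β x i + 1) := by
    intro x hx i
    rcases Finset.mem_insert.1 hx with rfl | hx
    · simp [ψ, hvA]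
    · have : x ∉ A := fun h => Finset.disjoint_left.1 hAB h hx
      simp [ψ, this]
  have hcA : ∀ x ∈ insert v A, ∀ y ∈ insert v A, side x ≠ side y → c x ≠ c y := by
    intro x hx y hy hxy
    simp only [Finset.mem_insert] at hx hy
    simp only [c]
    grind
  have hcB : ∀ x ∈ insert v B, ∀ y ∈ insert v B, side x ≠ side y → c x ≠ c y := by
    intro x hx y hy hxy
    have := Finset.disjoint_left.1 hAB
    simp only [Finset.mem_insert] at hx hy
    simp only [c]
    grind
  have hcAB : ∀ x ∈ A, ∀ y ∈ B, side x ≠ side y → c x = c y := by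
    intro x hx y hy hxy
    have := Finset.disjoint_left.1 hAB
    simp only [c]
    grind
  refine ⟨fun x => Fin.cons (c x) (ψ x), ?_⟩
  intro x hx y hy hxy
  rw [Fin.forall_fin_succ]
  simp only [Fin.cons_zero, Fin.cons_succ]
  have key : (x ∈ insert v A ∧ y ∈ insert v A) ∨ (x ∈ insert v B ∧ y ∈ insert v B) ∨
      (x ∈ A ∧ y ∈ B) ∨ (x ∈ B ∧ y ∈ A) := by
    simp only [Finset.mem_insert, Finset.mem_union] at *
    tauto
  rcases key with ⟨h1, h2⟩ | ⟨h1, h2⟩ | ⟨h1, h2⟩ | ⟨h1, h2⟩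
  · rw [hα x h1 y h2 hxy]
    simp only [hψA x h1, hψA y h2, ren_iff]
    exact ⟨fun h => ⟨hcA x h1 y h2 hxy, h⟩, fun h => h.2⟩
  · rw [hβ x h1 y h2 hxy]
    simp only [hψB x h1, hψB y h2, ren_iff]
    exact ⟨fun h => ⟨hcB x h1 y h2 hxy, h⟩, fun h => h.2⟩
  · exact ⟨fun h => absurd h (hno x h1 y h2), fun h => absurd (hcAB x h1 y h2 hxy) h.1⟩
  · exact ⟨fun h => absurd h.symm (hno y h2 x h1),
      fun h => absurd (hcAB y h2 x h1 hxy.symm).symm h.1⟩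

lemma reach_inv {V : Type*} {H : SimpleGraph V} {P : V → Prop}
    (hP : ∀ a b, H.Adj a b → (P a ↔ P b)) {x y : V} (h : H.Reachable x y) : P x ↔ P y := by
  obtain ⟨p⟩ := h
  induction p with
  | nil => exact Iff.rfl
  | cons h _ ih => exact (hP _ _ h).trans ih

lemma mem_cmp {V : Type*} {G : SimpleGraph V} {S : Finset V} {v x y : V} :
    y ∈ cmp G S v x ↔ y ∈ S ∧ y ≠ v ∧ (del G S v).Reachable x y := by
  classical
  simp only [cmp, Finset.mem_filter, Finset.mem_erase]
  tauto

/-- Acyclicity: a component of `S` minus `v` has at most one neighbour of `v`. -/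
lemma unique_nbr {V : Type*} {G : SimpleGraph V} (hG : G.IsAcyclic) {S : Finset V} {v u w : V}
    (hu : G.Adj v u) (hw : G.Adj v w) (h : (del G S v).Reachable w u) : w = u := by
  by_contra hne
  have hb := SimpleGraph.isAcyclic_iff_forall_adj_isBridge.1 hG hu
  rw [SimpleGraph.isBridge_iff] at hb
  apply hb
  have h1 : (G.deleteEdges {s(v, u)}).Adj v w := by
    rw [SimpleGraph.deleteEdges_adj]
    refine ⟨hw, ?_⟩
    have := hw.ne
    simp only [Set.mem_singleton_iff, Sym2.eq_iff]
    grind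
  refine h1.reachable.trans (h.mono ?_)
  intro a b hab
  rw [SimpleGraph.deleteEdges_adj]
  refine ⟨hab.1, ?_⟩
  have h1 := hab.2.2.2.1
  have h2 := hab.2.2.2.2
  simp only [Set.mem_singleton_iff, Sym2.eq_iff]
  grind

lemma centroid_aux {V : Type*} {G : SimpleGraph V} (hG : G.IsAcyclic) (S : Finset V) (k : ℕ) :
    (∃ v ∈ S, ∀ x ∈ S, x ≠ v → (cmp G S v x).card ≤ k) →
    ∃ v ∈ S, ∀ x ∈ S, x ≠ v → (cmp G S v x).card * 2 ≤ S.card := by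
  classical
  induction k with
  | zero =>
    rintro ⟨v, hv, h⟩
    exact ⟨v, hv, fun x hx hxv => by have := h x hx hxv; omega⟩
  | succ k ih =>
    rintro ⟨v, hv, h⟩
    by_cases hall : ∀ x ∈ S, x ≠ v → (cmp G S v x).card * 2 ≤ S.card
    · exact ⟨v, hv, hall⟩
    push Not at hall
    obtain ⟨x, hx, hxv, hbig⟩ := hall
    apply ih
    have hxC := h x hx hxv
    obtain ⟨u, huC, hu⟩ : ∃ u ∈ cmp G S v x, ∀ w ∈ cmp G S v x, G.Adj v w → w = u := by
      by_cases hex : ∃ u ∈ cmp G S v x, G.Adj v u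
      · obtain ⟨u, huC, hvu⟩ := hex
        refine ⟨u, huC, fun w hw hvw => unique_nbr hG hvu hvw (S := S) ?_⟩
        exact (mem_cmp.1 hw).2.2.symm.trans (mem_cmp.1 huC).2.2
      · exact ⟨x, mem_cmp.2 ⟨hx, hxv, SimpleGraph.Reachable.refl _⟩,
          fun w hw hvw => absurd ⟨w, hw, hvw⟩ hex⟩
    have step : ∀ a b, (del G S u).Adj a b → a ∈ cmp G S v x → b ∈ cmp G S v x := by
      intro a b hab ha
      obtain ⟨h1, h2, h3, h4, h5⟩ := hab
      have hbv : b ≠ v := by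
        rintro rfl
        exact h4 (hu a ha h1.symm)
      have ha' := mem_cmp.1 ha
      refine mem_cmp.2 ⟨h3, hbv, ha'.2.2.trans ?_⟩
      have : (del G S v).Adj a b := ⟨h1, h2, h3, ha'.2.1, hbv⟩
      exact this.reachable
    have inv : ∀ a b, (del G S u).Reachable a b → (a ∈ cmp G S v x ↔ b ∈ cmp G S v x) :=
      fun a b hab => reach_inv (P := fun z => z ∈ cmp G S v x)
        (fun a b h => ⟨step a b h, step b a h.symm⟩) hab
    refine ⟨u, (mem_cmp.1 huC).1, ?_⟩
    intro y hy hyu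
    by_cases hyC : y ∈ cmp G S v x
    · have hsub : cmp G S u y ⊆ (cmp G S v x).erase u := by
        intro z hz
        have hz' := mem_cmp.1 hz
        exact Finset.mem_erase.2 ⟨hz'.2.1, (inv y z hz'.2.2).1 hyC⟩
      have := Finset.card_le_card hsub
      rw [Finset.card_erase_of_mem huC] at this
      omega
    · have hsub : cmp G S u y ⊆ S \ cmp G S v x := by
        intro z hz
        have hz' := mem_cmp.1 hz
        exact Finset.mem_sdiff.2 ⟨hz'.1, fun hc => hyC ((inv y z hz'.2.2).2 hc)⟩
      have h1 := Finset.card_le_card hsub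
      have h2 : cmp G S v x ⊆ S := fun z hz => (mem_cmp.1 hz).1
      rw [Finset.card_sdiff_of_subset h2] at h1
      omega

lemma centroid {V : Type*} {G : SimpleGraph V} (hG : G.IsAcyclic) (S : Finset V)
    (hS : S.Nonempty) :
    ∃ v ∈ S, ∀ x ∈ S, x ≠ v → (cmp G S v x).card * 2 ≤ S.card := by
  obtain ⟨v, hv⟩ := hS
  exact centroid_aux hG S S.card
    ⟨v, hv, fun x _ _ => Finset.card_le_card fun z hz => (mem_cmp.1 hz).1⟩

open Classical in
/-- Splitting at `v` into two groups of size at most `K`, or three groups of size at most `J`. -/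
lemma split {V : Type*} {G : SimpleGraph V} {side : V → Bool} (S : Finset V) (v : V)
    (hv : v ∈ S) (K J a b : ℕ) (hc : ∀ x ∈ S, x ≠ v → (cmp G S v x).card ≤ K)
    (hJ : S.card ≤ K + J + 2)
    (hK : ∀ T : Finset V, T.card ≤ K + 1 → Good G side T a)
    (hJ' : (S.card ≤ K + 1 ∨ S.card > 3 * J + 1) ∨
      ∀ T : Finset V, T.card ≤ J + 1 → Good G side T b) (hb : b + 1 ≤ a) :
    Good G side S (a + 1) := by
  let X := S.erase v
  have hvX : v ∉ X := Finset.notMem_erase v S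
  have hSX : insert v X = S := Finset.insert_erase hv
  have hXc : X.card + 1 = S.card := Finset.card_erase_add_one hv
  let closed : Finset V → Prop := fun A => ∀ p q, (del G S v).Adj p q → p ∈ A → q ∈ A
  have hclosed_no : ∀ A B, closed A → A ⊆ X → B ⊆ X → Disjoint A B →
      ∀ p ∈ A, ∀ q ∈ B, ¬ G.Adj p q := by
    intro A B hA hAX hBX hAB p hp q hq hpq
    have hp' := Finset.mem_erase.1 (hAX hp)
    have hq' := Finset.mem_erase.1 (hBX hq)
    exact Finset.disjoint_left.1 hAB (hA p q ⟨hpq, hp'.2, hq'.2, hp'.1, hq'.1⟩ hp) hq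
  have hins : ∀ A ⊆ X, (insert v A).card = A.card + 1 :=
    fun A hA => Finset.card_insert_of_notMem fun h => hvX (hA h)
  have two : ∀ A B l, closed A → A ⊆ X → B ⊆ X → Disjoint A B → Good G side (insert v A) l →
      Good G side (insert v B) l → Good G side (insert v (A ∪ B)) (l + 1) :=
    fun A B l hA hAX hBX hAB h1 h2 => glue (fun h => hvX (hAX h)) (fun h => hvX (hBX h)) hAB
      (hclosed_no A B hA hAX hBX hAB) h1 h2
  obtain ⟨A, hA, hmax⟩ := Finset.exists_max_image
    (X.powerset.filter fun A => closed A ∧ A.card ≤ K) Finset.card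
    ⟨∅, by simp [closed]⟩
  simp only [Finset.mem_filter, Finset.mem_powerset] at hA hmax
  obtain ⟨hAX, hAcl, hAK⟩ := hA
  have hAcard := Finset.card_le_card hAX
  have hsd := Finset.card_sdiff_of_subset hAX
  by_cases hcase : X.card - A.card ≤ K
  · have := two A (X \ A) a hAcl hAX Finset.sdiff_subset Finset.disjoint_sdiff
      (hK _ (by rw [hins A hAX]; omega))
      (hK _ (by rw [hins _ Finset.sdiff_subset]; omega))
    rwa [Finset.union_sdiff_of_subset hAX, hSX] at this
  -- a component outside `A`
  obtain ⟨x, hx⟩ : (X \ A).Nonempty := by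
    rw [← Finset.card_pos]; omega
  obtain ⟨hxX, hxA⟩ := Finset.mem_sdiff.1 hx
  obtain ⟨hxv, hxS⟩ := Finset.mem_erase.1 hxX
  set F := cmp G S v x with hF
  have hFX : F ⊆ X := fun z hz =>
    Finset.mem_erase.2 ⟨(mem_cmp.1 hz).2.1, (mem_cmp.1 hz).1⟩
  have hxF : x ∈ F := mem_cmp.2 ⟨hxS, hxv, SimpleGraph.Reachable.refl _⟩
  have hFcl : closed F := by
    intro p q hpq hp
    exact mem_cmp.2 ⟨hpq.2.2.1, hpq.2.2.2.2, (mem_cmp.1 hp).2.2.trans hpq.reachable⟩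
  have hAF : Disjoint A F := by
    rw [Finset.disjoint_left]
    intro z hzA hzF
    exact hxA ((reach_inv (P := fun z => z ∈ A)
      (fun p q h => ⟨hAcl p q h, hAcl q p h.symm⟩) (mem_cmp.1 hzF).2.2).2 hzA)
  have hAFX : A ∪ F ⊆ X := Finset.union_subset hAX hFX
  have hAFcl : closed (A ∪ F) := by
    intro p q hpq hp
    rcases Finset.mem_union.1 hp with hp | hp
    · exact Finset.mem_union_left _ (hAcl p q hpq hp)
    · exact Finset.mem_union_right _ (hFcl p q hpq hp)
  have hcAF : (A ∪ F).card = A.card + F.card := Finset.card_union_of_disjoint hAF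
  have hFpos : 0 < F.card := Finset.card_pos.2 ⟨x, hxF⟩
  have hFK : F.card ≤ K := hc x hxS hxv
  have hFA : F.card ≤ A.card := hmax F ⟨hFX, hFcl, hFK⟩
  have hAFK : K < (A ∪ F).card := by
    by_contra hcon
    have := hmax (A ∪ F) ⟨hAFX, hAFcl, by omega⟩
    omega
  have hR := Finset.card_sdiff_of_subset hAFX
  have hAFc := Finset.card_le_card hAFX
  have hRX : X \ (A ∪ F) ⊆ X := Finset.sdiff_subset
  rcases hJ' with hJ' | hJ'
  · omega
  have hdAR : Disjoint A (X \ (A ∪ F)) :=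
    Finset.disjoint_sdiff.mono_left Finset.subset_union_left
  have hdFR : Disjoint F (A ∪ X \ (A ∪ F)) := by
    rw [Finset.disjoint_union_right]
    exact ⟨hAF.symm, Finset.disjoint_sdiff.mono_left Finset.subset_union_right⟩
  have g1 := two A (X \ (A ∪ F)) b hAcl hAX hRX hdAR
    (hJ' _ (by rw [hins A hAX]; omega)) (hJ' _ (by rw [hins _ hRX]; omega))
  have g2 := mono (hJ' (insert v F) (by rw [hins F hFX]; omega))
  have g3 := two F (A ∪ X \ (A ∪ F)) (b + 1) hFcl hFX (Finset.union_subset hAX hRX) hdFR g2 g1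
  have hU : F ∪ (A ∪ X \ (A ∪ F)) = X := by
    rw [← Finset.union_assoc, Finset.union_comm F A, Finset.union_sdiff_of_subset hAFX]
  rw [hU, hSX] at g3
  exact mono_le g3 (by omega)

lemma good_two {V : Type*} {G : SimpleGraph V} {side : V → Bool} (T : Finset V)
    (hT : T.card ≤ 2) : Good G side T 1 := by
  classical
  by_cases h : ∃ x ∈ T, ∃ y ∈ T, G.Adj x y
  · obtain ⟨x, hx, y, hy, hxy⟩ := h
    have hT2 : T = {x, y} := by
      symm
      apply Finset.eq_of_subset_of_card_le
      · intro z hz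
        simp only [Finset.mem_insert, Finset.mem_singleton] at hz
        rcases hz with rfl | rfl <;> assumption
      · rw [Finset.card_pair hxy.ne]; exact hT
    refine ⟨fun z _ => if z = x then 0 else 1, ?_⟩
    intro p hp q hq hpq
    have := hxy.ne
    have := hxy.symm
    subst hT2
    simp only [Finset.mem_insert, Finset.mem_singleton] at hp hq
    rcases hp with rfl | rfl <;> rcases hq with rfl | rfl <;> simp_all
    all_goals grind
  · push Not at h
    refine ⟨fun _ _ => 0, fun p hp q hq _ => ?_⟩
    simp [h p hp q hq]

lemma main {V : Type*} {G : SimpleGraph V} (hG : G.IsAcyclic) (side : V → Bool) (k : ℕ) :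
    1 ≤ k → ∃ l : ℕ, (1.618 : ℝ) ^ l ≤ 1.618 * k ∧
      ∀ T : Finset V, T.card ≤ k + 1 → Good G side T l := by
  induction k using Nat.strong_induction_on with
  | _ k ih =>
  intro hk
  have hempty : ∀ T : Finset V, ¬ T.Nonempty → ∀ l, Good G side T l := by
    intro T hT l
    rw [Finset.not_nonempty_iff_eq_empty] at hT
    subst hT
    exact ⟨fun _ _ => 0, by simp⟩
  rcases (by omega : k = 1 ∨ k = 2 ∨ k = 3 ∨ 4 ≤ k) with rfl | rfl | rfl | hk4
  · exact ⟨1, by norm_num, fun T hT => good_two T hT⟩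
  · refine ⟨2, by norm_num, fun T hT => ?_⟩
    by_cases hTn : T.Nonempty
    · obtain ⟨v, hv, hc⟩ := centroid hG T hTn
      refine split T v hv 1 0 1 0 (fun x hx hxv => ?_) (by omega) (fun T hT => good_two T hT)
        (Or.inl (by omega)) (by omega)
      have := hc x hx hxv
      omega
    · exact hempty T hTn _
  · have h2 : ∀ T : Finset V, T.card ≤ 3 → Good G side T 2 := by
      obtain ⟨l, hl, h⟩ := ih 2 (by omega) (by omega)
      intro T hT
      refine mono_le (h T hT) ?_
      by_contra hcon
      have : (1.618 : ℝ) ^ 3 ≤ 1.618 ^ l := pow_le_pow_right₀ (by norm_num) (by omega)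
      norm_num at this hl
      linarith
    refine ⟨3, by norm_num, fun T hT => ?_⟩
    by_cases hTn : T.Nonempty
    · obtain ⟨v, hv, hc⟩ := centroid hG T hTn
      refine split T v hv 2 0 2 0 (fun x hx hxv => ?_) (by omega) h2
        (Or.inl (by omega)) (by omega)
      have := hc x hx hxv
      omega
    · exact hempty T hTn _
  · obtain ⟨K, hKdef⟩ : ∃ K, K = 500 * k / 809 := ⟨_, rfl⟩
    obtain ⟨J, hJdef⟩ : ∃ J, J = k - K - 1 := ⟨_, rfl⟩
    obtain ⟨a, ha, hGa⟩ := ih K (by omega) (by omega)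
    obtain ⟨b, hb, hGb⟩ := ih J (by omega) (by omega)
    have hKR : (809 : ℝ) * K ≤ 500 * k := by
      have : 809 * K ≤ 500 * k := by omega
      exact_mod_cast this
    have hJR : (809 : ℝ) * J ≤ 309 * k := by
      have : 809 * J ≤ 309 * k := by omega
      exact_mod_cast this
    have hkR : (0 : ℝ) ≤ k := by positivity
    refine ⟨max a (b + 1) + 1, ?_, fun T hT => ?_⟩
    · rcases le_total a (b + 1) with h | h
      · rw [max_eq_right h, pow_succ, pow_succ]
        nlinarith
      · rw [max_eq_left h, pow_succ]
        nlinarith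
    · by_cases hTn : T.Nonempty
      · obtain ⟨v, hv, hc⟩ := centroid hG T hTn
        refine split T v hv K J (max a (b + 1)) b (fun x hx hxv => ?_) (by omega)
          (fun T hT => mono_le (hGa T hT) (le_max_left _ _)) (Or.inr hGb) (le_max_right _ _)
        have := hc x hx hxv
        omega
      · exact hempty T hTn _

lemma log_bound : Real.log 2 ≤ 1.441 * Real.log 1.618 := by
  have h : Real.log ((2 : ℝ) ^ 59) ≤ Real.log ((1.618 : ℝ) ^ 85) :=
    Real.log_le_log (by positivity) (by norm_num)
  rw [Real.log_pow, Real.log_pow] at h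
  have : 0 < Real.log 1.618 := Real.log_pos (by norm_num)
  push_cast at h
  linarith

end PdimForest

/-- Every forest on `n ≥ 1` vertices has product dimension at most
`1.441 log₂ n + 3`. -/
theorem pdim_forest {V : Type*} [Fintype V] (G : SimpleGraph V)
    (hforest : G.IsAcyclic) (hn : 1 ≤ Fintype.card V) :
    (pdim G : ℝ) ≤ 1.441 * Real.logb 2 (Fintype.card V) + 3 := by
  classical
  obtain ⟨C⟩ := hforest.colorable_two
  let side : V → Bool := fun x => decide (C x = 0)
  have hside : ∀ x y, G.Adj x y → side x ≠ side y := by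
    intro x y h
    have h1 := C.valid h
    simp only [side, ne_eq, decide_eq_decide]
    omega
  obtain ⟨l, hl, hgood⟩ := PdimForest.main hforest side (Fintype.card V) hn
  obtain ⟨φ, hφ⟩ := hgood Finset.univ (by rw [Finset.card_univ]; omega)
  have henc : pdim G ≤ l + 2 := by
    apply Nat.sInf_le
    let e := Fintype.equivFin V
    have he : ∀ x y, ((e x : ℕ) = (e y : ℕ)) → x = y :=
      fun x y h => e.injective (Fin.ext h)
    refine ⟨fun x => Fin.cons (if side x then 1 else 0) (Fin.cons (e x : ℕ) (φ x)), ?_, ?_⟩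
    · intro x y hxy
      have := congrFun hxy (Fin.succ 0)
      simp only [Fin.cons_succ, Fin.cons_zero] at this
      exact he x y this
    · intro x y hxy
      rw [Fin.forall_fin_succ, Fin.forall_fin_succ]
      simp only [Fin.cons_succ, Fin.cons_zero]
      constructor
      · intro h
        have hs := hside x y h
        refine ⟨?_, fun h => hxy (he x y h), (hφ x (Finset.mem_univ _) y (Finset.mem_univ _) hs).1 h⟩
        revert hs
        cases side x <;> cases side y <;> simp
      · rintro ⟨h1, -, h3⟩
        have hs : side x ≠ side y := fun h => h1 (by rw [h])
        exact (hφ x (Finset.mem_univ _) y (Finset.mem_univ _) hs).2 h3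
  have hnR : (1 : ℝ) ≤ Fintype.card V := by exact_mod_cast hn
  have hlog : (l : ℝ) * Real.log 1.618 ≤ Real.log 1.618 + Real.log (Fintype.card V) := by
    have := Real.log_le_log (by positivity) hl
    rwa [Real.log_pow, Real.log_mul (by norm_num) (by positivity)] at this
  have hb := PdimForest.log_bound
  have hpos : 0 < Real.log 1.618 := Real.log_pos (by norm_num)
  have h2 : 0 < Real.log 2 := Real.log_pos (by norm_num)
  have hln : 0 ≤ Real.log (Fintype.card V) := Real.log_nonneg hnR
  have hB : Real.log (Fintype.card V) = Real.logb 2 (Fintype.card V) * Real.log 2 := by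
    rw [Real.logb, div_mul_cancel₀ _ h2.ne']
  have hBn : 0 ≤ Real.logb 2 (Fintype.card V) := Real.logb_nonneg (by norm_num) hnR
  have hlR : (l : ℝ) ≤ 1.441 * Real.logb 2 (Fintype.card V) + 1 := by
    rw [← mul_le_mul_iff_of_pos_right hpos]
    rw [hB] at hlog
    nlinarith [mul_le_mul_of_nonneg_left hb hBn]
  have : (pdim G : ℝ) ≤ l + 2 := by exact_mod_cast henc
  linarith
end

section
/- Every graph G on n vertices with treewidth at most t has product dimension at most (t+2)(log₂ n + 1). -/
/-- `G` has a tree decomposition of width at most `t`. -/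
def HasTreewidthLE {V : Type*} (G : SimpleGraph V) (t : ℕ) : Prop :=
  ∃ (I : Type) (_ : Fintype I) (T : SimpleGraph I) (X : I → Finset V),
    T.Connected ∧ T.IsAcyclic ∧
    (∀ v : V, ∃ i, v ∈ X i) ∧
    (∀ u v : V, G.Adj u v → ∃ i, u ∈ X i ∧ v ∈ X i) ∧
    (∀ v : V, (T.induce {i | v ∈ X i}).Connected) ∧
    (∀ i, (X i).card ≤ t + 1)


section PEO

lemma twp_parent_unique {I : Type} {T : SimpleGraph I} (hc : T.Connected) (ha : T.IsAcyclic)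
    (r x y y' : I) (h1 : T.Adj x y) (h2 : T.Adj x y')
    (d1 : T.dist r y + 1 = T.dist r x) (d2 : T.dist r y' + 1 = T.dist r x) : y = y' := by
  obtain ⟨p, hp⟩ := hc.exists_walk_length_eq_dist y r
  obtain ⟨p', hp'⟩ := hc.exists_walk_length_eq_dist y' r
  have e1 : (SimpleGraph.Walk.cons h1 p).IsPath := by
    apply SimpleGraph.Walk.isPath_of_length_eq_dist
    rw [SimpleGraph.Walk.length_cons, hp, T.dist_comm, d1, T.dist_comm]
  have e2 : (SimpleGraph.Walk.cons h2 p').IsPath := by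
    apply SimpleGraph.Walk.isPath_of_length_eq_dist
    rw [SimpleGraph.Walk.length_cons, hp', T.dist_comm, d2, T.dist_comm]
  have := (ha.subsingleton_path x r).elim ⟨_, e1⟩ ⟨_, e2⟩
  have h3 := congrArg (fun q : T.Path x r => q.1.snd) this
  simpa using h3

lemma twp_up {I : Type} {T : SimpleGraph I} (hc : T.Connected) (ha : T.IsAcyclic)
    (r : I) (C : Set I) (hC : (T.induce C).Connected) (i j : I) (hi : i ∈ C) (hj : j ∈ C)
    (hij : j ≠ i) (hd : T.dist r j ≤ T.dist r i) :
    ∃ y ∈ C, T.Adj i y ∧ T.dist r y + 1 = T.dist r i := by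
  by_contra hcon
  push Not at hcon
  set st : I → I → Prop := fun a b => T.Adj a b ∧ T.dist r b = T.dist r a + 1 with hst
  have key : ∀ k : C, Relation.ReflTransGen st i k := by
    intro k
    have hr : (T.induce C).Reachable ⟨i, hi⟩ k := hC.preconnected _ _
    rw [SimpleGraph.reachable_iff_reflTransGen] at hr
    induction hr with
    | refl => exact Relation.ReflTransGen.refl
    | @tail a b hab hb ih =>
      have hadj : T.Adj a.1 b.1 := by simpa using hb
      have hor := SimpleGraph.IsTree.dist_eq_dist_add_one_of_adj ⟨hc, ha⟩ r hadj
      rcases hor with h | h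
      · rcases Relation.ReflTransGen.cases_tail ih with h0 | ⟨p, hp1, hp2⟩
        · exfalso
          apply hcon b.1 b.2
          · rw [← h0]; exact hadj
          · rw [← h0]; exact h.symm
        · have : p = b.1 := twp_parent_unique hc ha r a.1 p b.1 hp2.1.symm hadj hp2.2.symm h.symm
          rw [← this]; exact hp1
      · exact ih.tail ⟨hadj, h⟩
  have hk := key ⟨j, hj⟩
  have hlt : ∀ k, Relation.ReflTransGen st i k → k = i ∨ T.dist r i < T.dist r k := by
    intro k hk
    induction hk with
    | refl => left; rfl
    | tail _ hb ih =>
      right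
      have := hb.2
      rcases ih with h | h
      · subst h; omega
      · omega
  rcases hlt _ hk with h | h
  · exact hij h
  · simp at h; omega

lemma twp_helly {I : Type} {T : SimpleGraph I} (hc : T.Connected) (ha : T.IsAcyclic)
    (r : I) (C C' : Set I) (hC : (T.induce C).Connected) (hC' : (T.induce C').Connected)
    (c c' : I) (hcC : c ∈ C) (hcC' : c' ∈ C') (hm : ∀ k ∈ C, T.dist r c ≤ T.dist r k)
    (hm' : ∀ k ∈ C', T.dist r c' ≤ T.dist r k) (hcc : T.dist r c ≤ T.dist r c') :
    ∀ (n : ℕ) (i : I), T.dist r i = n → i ∈ C → i ∈ C' → c' ∈ C := by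
  intro n
  induction n with
  | zero =>
    intro i hi h1 h2
    by_cases hic : c' = i
    · rw [hic]; exact h1
    · obtain ⟨y, hy, _, h⟩ := twp_up hc ha r C' hC' i c' h2 hcC' hic (hm' i h2)
      omega
  | succ n ih =>
    intro i hi h1 h2
    by_cases hic : c' = i
    · rw [hic]; exact h1
    · obtain ⟨y', hy', hy1, hy2⟩ := twp_up hc ha r C' hC' i c' h2 hcC' hic (hm' i h2)
      have hci : c ≠ i := by
        rintro rfl
        have := hm' y' hy'
        omega
      obtain ⟨y, hy, hy3, hy4⟩ := twp_up hc ha r C hC i c h1 hcC hci (hm i h1)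
      have : y = y' := twp_parent_unique hc ha r i y y' hy3 hy1 hy4 hy2
      subst this
      exact ih y (by omega) hy hy'

lemma twp_peo {V : Type*} [Fintype V] [DecidableEq V] (G : SimpleGraph V)
    (t : ℕ) (htw : HasTreewidthLE G t) :
    ∃ (rk : V → ℕ) (N : V → Finset V), Function.Injective rk ∧
      (∀ v, ∀ u ∈ N v, rk u < rk v) ∧
      (∀ u v, G.Adj u v → rk u < rk v → u ∈ N v) ∧
      (∀ v, (N v).card ≤ t) ∧
      (∀ v, ∀ u ∈ N v, ∀ w ∈ N v, rk u < rk w → u ∈ N w) := by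
  classical
  obtain ⟨I, _, T, X, hc, ha, hcov, hedge, hconn, hcard⟩ := htw
  obtain ⟨r⟩ := hc.nonempty
  have htop : ∀ v, ∃ i, v ∈ X i ∧ ∀ k, v ∈ X k → T.dist r i ≤ T.dist r k := by
    intro v
    obtain ⟨i, hi, hmin⟩ := Finset.exists_min_image (Finset.univ.filter fun i => v ∈ X i)
      (fun i => T.dist r i) (by obtain ⟨i, hi⟩ := hcov v; exact ⟨i, by simpa using hi⟩)
    exact ⟨i, by simpa using hi, fun k hk => hmin k (by simpa using hk)⟩
  choose top htop1 htop2 using htop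
  set e := Fintype.equivFin V
  set n := Fintype.card V
  set rk : V → ℕ := fun v => T.dist r (top v) * n + (e v : ℕ) with hrk
  have hdle : ∀ u v, rk u < rk v → T.dist r (top u) ≤ T.dist r (top v) := by
    intro u v h
    by_contra hlt
    push Not at hlt
    have h1 : (T.dist r (top v) + 1) * n ≤ T.dist r (top u) * n := Nat.mul_le_mul_right _ hlt
    have h2 := (e v).2
    have h3 : (T.dist r (top v) + 1) * n = T.dist r (top v) * n + n := by ring
    simp only [hrk] at h
    omega
  have hinj : Function.Injective rk := by
    intro u v h
    have h2 := (e v).2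
    have h3 := (e u).2
    have hn : 0 < n := by omega
    have h4 := congrArg (· % n) h
    simp only [hrk, Nat.mul_add_mod_self_right, Nat.mod_eq_of_lt h2, Nat.mod_eq_of_lt h3] at h4
    exact e.injective (Fin.ext h4)
  have hell : ∀ u w i, u ∈ X i → w ∈ X i → rk u < rk w → u ∈ X (top w) := by
    intro u w i hu hw h
    exact twp_helly hc ha r {i | u ∈ X i} {i | w ∈ X i} (hconn u) (hconn w) (top u) (top w)
      (htop1 u) (htop1 w) (htop2 u) (htop2 w) (hdle u w h) _ i rfl hu hw
  refine ⟨rk, fun v => (X (top v)).filter fun u => rk u < rk v, hinj, ?_, ?_, ?_, ?_⟩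
  · intro v u hu
    exact (Finset.mem_filter.1 hu).2
  · intro u v huv hlt
    obtain ⟨i, hi1, hi2⟩ := hedge u v huv
    exact Finset.mem_filter.2 ⟨hell u v i hi1 hi2 hlt, hlt⟩
  · intro v
    have : ((X (top v)).filter fun u => rk u < rk v) ⊆ (X (top v)).erase v := by
      intro u hu
      rw [Finset.mem_filter] at hu
      refine Finset.mem_erase.2 ⟨?_, hu.1⟩
      rintro rfl
      exact lt_irrefl _ hu.2
    have h1 := Finset.card_le_card this
    rw [Finset.card_erase_of_mem (htop1 v)] at h1
    have := hcard (top v)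
    change Finset.card (Finset.filter _ _) ≤ t
    omega
  · intro v u hu w hw hlt
    rw [Finset.mem_filter] at hu hw
    exact Finset.mem_filter.2 ⟨hell u w _ hu.1 hw.1 hlt, hlt⟩

lemma twp_colour {V : Type*} [Fintype V] [DecidableEq V] (t : ℕ) (rk : V → ℕ) (N : V → Finset V)
    (N1 : ∀ v, ∀ u ∈ N v, rk u < rk v) (N3 : ∀ v, (N v).card ≤ t) :
    ∃ χ : V → ZMod (t + 1), ∀ v, ∀ u ∈ N v, χ u ≠ χ v := by
  classical
  have key : ∀ m : ℕ, ∃ χ : V → ZMod (t + 1), ∀ v, rk v < m → ∀ u ∈ N v, χ u ≠ χ v := by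
    intro m
    induction m with
    | zero => exact ⟨fun _ => 0, fun v h => by omega⟩
    | succ m ih =>
      obtain ⟨χ, hχ⟩ := ih
      have hfree : ∀ v, ∃ c : ZMod (t + 1), c ∉ (N v).image χ := by
        intro v
        by_contra hcon
        push Not at hcon
        have h1 : (Finset.univ : Finset (ZMod (t + 1))) ⊆ (N v).image χ := fun c _ => hcon c
        have h2 := Finset.card_le_card h1
        have h3 := Finset.card_image_le (s := N v) (f := χ)
        have h4 := N3 v
        rw [Finset.card_univ, ZMod.card] at h2
        omega
      choose g hg using hfree
      refine ⟨fun v => if rk v = m then g v else χ v, ?_⟩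
      intro v hv u hu
      have hlt := N1 v u hu
      have hu' : rk u ≠ m := by omega
      by_cases hvm : rk v = m
      · simp only [hu', hvm, if_true, if_false]
        intro h
        exact hg v (h ▸ Finset.mem_image_of_mem χ hu)
      · simp only [hu', hvm, if_false]
        exact hχ v (by omega) u hu
  obtain ⟨χ, hχ⟩ := key (Finset.univ.sup rk + 1)
  exact ⟨χ, fun v => hχ v (Nat.lt_succ_of_le (Finset.le_sup (f := rk) (Finset.mem_univ v)))⟩

end PEO

section Split

def twR {V : Type*} (N : V → Finset V) : V → V → Prop :=
  Relation.ReflTransGen (fun a b => a ∈ N b)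

lemma twR_rk {V : Type*} {rk : V → ℕ} {N : V → Finset V}
    (N1 : ∀ v, ∀ u ∈ N v, rk u < rk v) {x w : V} (h : twR N x w) : x = w ∨ rk x < rk w := by
  unfold twR at h
  induction h with
  | refl => left; rfl
  | tail _ hb ih =>
    right
    have := N1 _ _ hb
    rcases ih with h | h
    · subst h; exact this
    · omega

lemma twR_fact {V : Type*} {rk : V → ℕ} {N : V → Finset V} (hinj : Function.Injective rk)
    (N4 : ∀ v, ∀ u ∈ N v, ∀ w ∈ N v, rk u < rk w → u ∈ N w) {x w : V} (h : twR N x w) :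
    ∀ y ∈ N w, twR N x y ∨ y ∈ N x := by
  unfold twR at h
  induction h with
  | refl => intro y hy; right; exact hy
  | @tail a w ha hb ih =>
    intro y hy
    rcases lt_trichotomy (rk y) (rk a) with h | h | h
    · exact ih y (N4 w y hy a hb h)
    · left; rw [hinj h]; exact ha
    · left; exact Relation.ReflTransGen.tail ha (N4 w a hb y hy h)

lemma tw_pack {V : Type*} [DecidableEq V] {rk : V → ℕ} {N : V → Finset V}
    (hinj : Function.Injective rk)
    (N1 : ∀ v, ∀ u ∈ N v, rk u < rk v)
    (N4 : ∀ v, ∀ u ∈ N v, ∀ w ∈ N v, rk u < rk w → u ∈ N w)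
    (D : Finset V) (M : ℕ)
    (hD : ∀ y a w, y ∈ D → w ∈ D → twR N y a → a ∈ N w → a ∈ D)
    (hM : ∀ y ∈ D, ∀ Y ⊆ D, (∀ w ∈ Y, twR N y w) → Y.card ≤ M) :
    ∃ C1 C2 : Finset V, C1 ⊆ D ∧ C2 ⊆ D ∧ Disjoint C1 C2 ∧ C1.card ≤ M ∧ C2.card ≤ M ∧
      (∀ a ∈ D, ∀ b ∈ D, a ∈ N b → (a ∈ C1 ↔ b ∈ C1)) ∧
      (∀ a ∈ D, ∀ b ∈ D, a ∈ N b → (a ∈ C2 ↔ b ∈ C2)) ∧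
      (C1 ∪ C2 = D ∨ M ≤ C1.card + C2.card) := by
  classical
  let closed : Finset V → Prop := fun C => ∀ a ∈ D, ∀ b ∈ D, a ∈ N b → (a ∈ C ↔ b ∈ C)
  obtain ⟨C1, hC1, hmax1⟩ := Finset.exists_max_image
    (D.powerset.filter fun C => closed C ∧ C.card ≤ M) Finset.card
    ⟨∅, by simp [closed]⟩
  simp only [Finset.mem_filter, Finset.mem_powerset] at hC1 hmax1
  obtain ⟨C2, hC2, hmax2⟩ := Finset.exists_max_image
    (D.powerset.filter fun C => Disjoint C1 C ∧ closed C ∧ C.card ≤ M) Finset.card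
    ⟨∅, by simp [closed]⟩
  simp only [Finset.mem_filter, Finset.mem_powerset] at hC2 hmax2
  obtain ⟨s1, cl1, m1⟩ := hC1
  obtain ⟨s2, dj, cl2, m2⟩ := hC2
  refine ⟨C1, C2, s1, s2, dj, m1, m2, cl1, cl2, ?_⟩
  by_cases hE : (D \ (C1 ∪ C2)).Nonempty
  · right
    obtain ⟨y, hy, hymin⟩ := Finset.exists_min_image _ rk hE
    have hclE : closed (D \ (C1 ∪ C2)) := by
      intro a ha b hb hab
      have h1 := cl1 a ha b hb hab
      have h2 := cl2 a ha b hb hab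
      simp only [Finset.mem_sdiff, Finset.mem_union, ha, hb, h1, h2]
    set E := D \ (C1 ∪ C2) with hEdef
    have hyD : y ∈ D := (Finset.mem_sdiff.1 hy).1
    let Y := D.filter fun w => twR N y w
    have hYE : Y ⊆ E := by
      have key : ∀ w, twR N y w → w ∈ D → w ∈ E := by
        intro w hw
        unfold twR at hw
        induction hw with
        | refl => intro _; exact hy
        | @tail a w ha hb ih =>
          intro hw
          have haD := hD y a w hyD hw ha hb
          exact (hclE a haD w hw hb).1 (ih haD)
      intro w hw
      have := Finset.mem_filter.1 hw
      exact key w this.2 this.1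
    have hYcl : closed Y := by
      intro a ha b hb hab
      simp only [Y, Finset.mem_filter, ha, hb, true_and]
      constructor
      · intro h; exact Relation.ReflTransGen.tail h hab
      · intro h
        rcases twR_fact hinj N4 h a hab with h1 | h1
        · exact h1
        · exfalso
          have haE := (hclE a ha y hyD h1).2 hy
          have := hymin a haE
          have := N1 y a h1
          omega
    have hyY : y ∈ Y := Finset.mem_filter.2 ⟨hyD, Relation.ReflTransGen.refl⟩
    have hYM : Y.card ≤ M := hM y hyD Y (Finset.filter_subset _ _)
      (fun w hw => (Finset.mem_filter.1 hw).2)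
    have hY1 : Disjoint C1 Y := by
      rw [Finset.disjoint_left]
      intro a ha haY
      have := Finset.mem_sdiff.1 (hYE haY)
      exact this.2 (Finset.mem_union_left _ ha)
    have hY2 : Disjoint C2 Y := by
      rw [Finset.disjoint_left]
      intro a ha haY
      have := Finset.mem_sdiff.1 (hYE haY)
      exact this.2 (Finset.mem_union_right _ ha)
    have hYD : Y ⊆ D := Finset.filter_subset _ _
    have a1 : Y.card ≤ C2.card := hmax2 Y ⟨hYD, hY1, hYcl, hYM⟩
    have a2 : C2.card ≤ C1.card := hmax1 C2 ⟨s2, cl2, m2⟩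
    have hpos : 0 < Y.card := Finset.card_pos.2 ⟨y, hyY⟩
    by_contra hlt
    have hcu : (C2 ∪ Y).card = C2.card + Y.card := Finset.card_union_of_disjoint hY2
    have a3 := hmax2 (C2 ∪ Y) ⟨Finset.union_subset s2 hYD, Finset.disjoint_union_right.2 ⟨dj, hY1⟩,
      (by
        intro a ha b hb hab
        have h1 := hYcl a ha b hb hab
        have h2 := cl2 a ha b hb hab
        simp only [Finset.mem_union, h1, h2]), by omega⟩
    omega
  · left
    rw [Finset.not_nonempty_iff_eq_empty, Finset.sdiff_eq_empty_iff_subset] at hE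
    exact Finset.Subset.antisymm (Finset.union_subset s1 s2) hE

lemma tw_split_aux {V : Type*} [DecidableEq V] {rk : V → ℕ} {N : V → Finset V}
    (W S S' D C1 C2 : Finset V) (M : ℕ) (hDW : D ⊆ W)
    (hW : W.card ≤ 2 * M) (hSW : ∀ s ∈ S, ∀ w ∈ W, rk s < rk w)
    (s1 : C1 ⊆ D) (s2 : C2 ⊆ D) (dj : Disjoint C1 C2) (m1 : C1.card ≤ M) (m2 : C2.card ≤ M)
    (cl1 : ∀ a ∈ D, ∀ b ∈ D, a ∈ N b → (a ∈ C1 ↔ b ∈ C1))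
    (cl2 : ∀ a ∈ D, ∀ b ∈ D, a ∈ N b → (a ∈ C2 ↔ b ∈ C2))
    (hbig : M ≤ C1.card + C2.card ∨ (W.card ≤ M + C1.card + C2.card))
    (hcl : ∀ v ∈ W, ∀ u ∈ N v, u ∈ W ∨ u ∈ S)
    (hup : ∀ v ∈ W, ∀ u ∈ N v, u ∈ D → v ∈ D)
    (hdn : ∀ v ∈ D, ∀ u ∈ N v, u ∈ D ∨ u ∈ S')
    (hS'1 : ∀ s ∈ S', (s ∈ W ∧ s ∉ D) ∨ s ∈ S)
    (hS'2 : ∀ s ∈ S', ∀ v ∈ D, rk s < rk v) :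
    ∃ (grp : V → Fin 3), (∀ g, (W.filter fun v => grp v = g).card ≤ M) ∧
      (∀ v, v ∉ W → grp v = 0) ∧
      (∀ v ∈ W, grp v = 0 → ∀ u ∈ N v, (u ∈ W ∧ grp u = 0) ∨ u ∈ S) ∧
      (∀ v ∈ W, grp v ≠ 0 → ∀ u ∈ N v, (u ∈ W ∧ grp u = grp v) ∨ u ∈ S') ∧
      (∀ s ∈ S', grp s = 0 ∧ (s ∈ W ∨ s ∈ S)) ∧
      (∀ s ∈ S', ∀ v ∈ W, grp v ≠ 0 → rk s < rk v) := by
  classical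
  let grp : V → Fin 3 := fun v => if v ∈ C1 then 1 else if v ∈ C2 then 2 else 0
  have g1 : ∀ v, grp v = 1 ↔ v ∈ C1 := by
    intro v; simp only [grp]; split_ifs <;> simp_all
  have g2 : ∀ v, grp v = 2 ↔ v ∈ C2 := by
    intro v
    have : v ∈ C1 → v ∉ C2 := fun h => Finset.disjoint_left.1 dj h
    simp only [grp]; split_ifs <;> simp_all
  have g0 : ∀ v, grp v = 0 ↔ v ∉ C1 ∧ v ∉ C2 := by
    intro v; simp only [grp]; split_ifs <;> simp_all
  have hne : ∀ v, grp v ≠ 0 → v ∈ D := by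
    intro v h
    rw [ne_eq, g0] at h
    by_cases h1 : v ∈ C1
    · exact s1 h1
    · exact s2 (by tauto)
  have hcg : ∀ a ∈ D, ∀ b ∈ D, a ∈ N b → grp a = grp b := by
    intro a ha b hb hab
    simp only [grp, cl1 a ha b hb hab, cl2 a ha b hb hab]
  refine ⟨grp, ?_, ?_, ?_, ?_, ?_, ?_⟩
  · intro g
    have hg : g = 0 ∨ g = 1 ∨ g = 2 := by fin_cases g <;> simp
    rcases hg with rfl | rfl | rfl
    · have : (W.filter fun v => grp v = 0) = W \ (C1 ∪ C2) := by
        ext v; simp [g0]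
      rw [this, Finset.card_sdiff_of_subset (Finset.union_subset (s1.trans hDW) (s2.trans hDW)),
        Finset.card_union_of_disjoint dj]
      omega
    · refine le_trans (Finset.card_le_card ?_) m1
      intro v hv; exact (g1 v).1 (Finset.mem_filter.1 hv).2
    · refine le_trans (Finset.card_le_card ?_) m2
      intro v hv; exact (g2 v).1 (Finset.mem_filter.1 hv).2
  · intro v hv
    by_contra h
    exact hv (hDW (hne v h))
  · intro v hv h0 u hu
    rcases hcl v hv u hu with h | h
    · left
      refine ⟨h, ?_⟩
      by_contra h1
      have hD1 := hne u h1
      rw [hcg u hD1 v (hup v hv u hu hD1) hu] at h1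
      exact h1 h0
    · right; exact h
  · intro v hv h0 u hu
    have hvD := hne v h0
    rcases hdn v hvD u hu with h | h
    · left; exact ⟨hDW h, hcg u h v hvD hu⟩
    · right; exact h
  · intro s hs
    rcases hS'1 s hs with h | h
    · refine ⟨?_, Or.inl h.1⟩
      by_contra h1; exact h.2 (hne s h1)
    · refine ⟨?_, Or.inr h⟩
      by_contra h1
      exact lt_irrefl _ (hSW s h s (hDW (hne s h1)))
  · intro s hs v _ h0
    exact hS'2 s hs v (hne v h0)

lemma tw_split {V : Type*} [DecidableEq V] {rk : V → ℕ} {N : V → Finset V}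
    (hinj : Function.Injective rk)
    (N1 : ∀ v, ∀ u ∈ N v, rk u < rk v)
    (N4 : ∀ v, ∀ u ∈ N v, ∀ w ∈ N v, rk u < rk w → u ∈ N w)
    (W S : Finset V) (M : ℕ)
    (hcl : ∀ v ∈ W, ∀ u ∈ N v, u ∈ W ∨ u ∈ S)
    (hSW : ∀ s ∈ S, ∀ w ∈ W, rk s < rk w)
    (hS : ∀ s ∈ S, ∀ s' ∈ S, rk s < rk s' → s ∈ N s')
    (hW : W.card ≤ 2 * M) :
    ∃ (grp : V → Fin 3) (S' : Finset V), (∀ g, (W.filter fun v => grp v = g).card ≤ M) ∧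
      (∀ v, v ∉ W → grp v = 0) ∧
      (∀ v ∈ W, grp v = 0 → ∀ u ∈ N v, (u ∈ W ∧ grp u = 0) ∨ u ∈ S) ∧
      (∀ v ∈ W, grp v ≠ 0 → ∀ u ∈ N v, (u ∈ W ∧ grp u = grp v) ∨ u ∈ S') ∧
      (∀ s ∈ S', grp s = 0 ∧ (s ∈ W ∨ s ∈ S)) ∧
      (∀ s ∈ S', ∀ v ∈ W, grp v ≠ 0 → rk s < rk v) ∧
      (∀ s ∈ S', ∀ s' ∈ S', rk s < rk s' → s ∈ N s') := by
  classical
  have hRW : ∀ y a w, y ∈ W → w ∈ W → twR N y a → a ∈ N w → a ∈ W := by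
    intro y a w hy hw hya haw
    rcases hcl w hw a haw with h | h
    · exact h
    · rcases twR_rk N1 hya with h1 | h1
      · rw [← h1]; exact hy
      · have := hSW a h y hy
        omega
  by_cases hA : ∃ x ∈ W, M < (W.filter fun w => twR N x w).card
  · obtain ⟨x0, hx0, hx0'⟩ := hA
    obtain ⟨x, hx, hxmax⟩ := Finset.exists_max_image
      (W.filter fun x => M < (W.filter fun w => twR N x w).card) rk
      ⟨x0, Finset.mem_filter.2 ⟨hx0, hx0'⟩⟩
    rw [Finset.mem_filter] at hx
    obtain ⟨hxW, hxM⟩ := hx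
    set D := (W.filter fun w => twR N x w).erase x with hDdef
    have memD : ∀ w, w ∈ D ↔ w ≠ x ∧ w ∈ W ∧ twR N x w := by
      intro w; simp [hDdef]
    have rkD : ∀ w ∈ D, rk x < rk w := by
      intro w hw
      have h := (memD w).1 hw
      rcases twR_rk N1 h.2.2 with h1 | h1
      · exact absurd h1.symm h.1
      · exact h1
    have hDc : M ≤ D.card := by
      have hxm : x ∈ W.filter fun w => twR N x w :=
        Finset.mem_filter.2 ⟨hxW, Relation.ReflTransGen.refl⟩
      rw [hDdef, Finset.card_erase_of_mem hxm]
      omega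
    have hDW : D ⊆ W := fun w hw => ((memD w).1 hw).2.1
    obtain ⟨C1, C2, s1, s2, dj, m1, m2, cl1, cl2, hor⟩ := tw_pack hinj N1 N4 D M
      (by
        intro y a w hy hw hya haw
        rw [memD]
        have hy' := (memD y).1 hy
        have hya' := twR_rk N1 hya
        refine ⟨?_, hRW y a w (hDW hy) (hDW hw) hya haw, Relation.ReflTransGen.trans hy'.2.2 hya⟩
        rintro rfl
        have := rkD y hy
        rcases hya' with h | h
        · exact hy'.1 h
        · omega)
      (by
        intro y hy Y hYD hY
        by_contra hlt
        push Not at hlt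
        have h1 : Y ⊆ W.filter fun w => twR N y w := fun w hw =>
          Finset.mem_filter.2 ⟨hDW (hYD hw), hY w hw⟩
        have h2 := hxmax y (Finset.mem_filter.2 ⟨hDW hy, lt_of_lt_of_le hlt (Finset.card_le_card h1)⟩)
        have := rkD y hy
        omega)
    have hbig : M ≤ C1.card + C2.card := by
      rcases hor with h | h
      · rw [← Finset.card_union_of_disjoint dj, h]; exact hDc
      · exact h
    obtain ⟨grp, h⟩ := tw_split_aux (rk := rk) (N := N) W S (insert x (N x)) D C1 C2 M hDW hW hSW s1 s2
      dj m1 m2 cl1 cl2 (Or.inl hbig) hcl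
      (by
        intro v hv u hu huD
        have h := (memD u).1 huD
        rw [memD]
        refine ⟨?_, hv, Relation.ReflTransGen.tail h.2.2 hu⟩
        rintro rfl
        have := rkD u huD
        have := N1 _ _ hu
        omega)
      (by
        intro v hv u hu
        have h := (memD v).1 hv
        by_cases hux : u = x
        · right; rw [hux]; exact Finset.mem_insert_self _ _
        rcases twR_fact hinj N4 h.2.2 u hu with h1 | h1
        · left
          rw [memD]
          exact ⟨hux, hRW x u v hxW h.2.1 h1 hu, h1⟩
        · right; exact Finset.mem_insert_of_mem h1)
      (by
        intro s hs
        rcases Finset.mem_insert.1 hs with h | h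
        · left; subst h; exact ⟨hxW, fun h => ((memD s).1 h).1 rfl⟩
        · rcases hcl x hxW s h with h1 | h1
          · left
            refine ⟨h1, fun h2 => ?_⟩
            have := rkD s h2
            have := N1 _ _ h
            omega
          · right; exact h1)
      (by
        intro s hs v hv
        have := rkD v hv
        rcases Finset.mem_insert.1 hs with h | h
        · subst h; exact this
        · have := N1 _ _ h
          omega)
    refine ⟨grp, insert x (N x), h.1, h.2.1, h.2.2.1, h.2.2.2.1, h.2.2.2.2.1, h.2.2.2.2.2, ?_⟩
    intro s hs s' hs' hlt
    rcases Finset.mem_insert.1 hs with h | h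
    · rcases Finset.mem_insert.1 hs' with h' | h'
      · subst h; subst h'; exact absurd hlt (lt_irrefl _)
      · subst h; have := N1 _ _ h'; omega
    · rcases Finset.mem_insert.1 hs' with h' | h'
      · subst h'; exact h
      · exact N4 x s h s' h' hlt
  · push Not at hA
    obtain ⟨C1, C2, s1, s2, dj, m1, m2, cl1, cl2, hor⟩ := tw_pack hinj N1 N4 W M hRW
      (by
        intro y hy Y hYD hY
        refine le_trans (Finset.card_le_card ?_) (hA y hy)
        exact fun w hw => Finset.mem_filter.2 ⟨hYD hw, hY w hw⟩)
    obtain ⟨grp, h⟩ := tw_split_aux (rk := rk) (N := N) W S S W C1 C2 M (Finset.Subset.refl _) hW hSW s1 s2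
      dj m1 m2 cl1 cl2
      (by
        rcases hor with h | h
        · right
          have := Finset.card_union_of_disjoint dj
          rw [h] at this; omega
        · left; exact h) hcl (fun v hv _ _ _ => hv) hcl (fun s hs => Or.inr hs) hSW
    exact ⟨grp, S, h.1, h.2.1, h.2.2.1, h.2.2.2.1, h.2.2.2.2.1, h.2.2.2.2.2, hS⟩

end Split

section Main

/-- The pair `(W, S)` is admissible: `S` is a clique preceding `W` that contains the
outside back neighbours of `W`. -/
def twGood {V : Type*} (rk : V → ℕ) (N : V → Finset V) (W S : Finset V) : Prop :=
  (∀ v ∈ W, ∀ u ∈ N v, u ∈ W ∨ u ∈ S) ∧ (∀ s ∈ S, ∀ w ∈ W, rk s < rk w) ∧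
    (∀ s ∈ S, ∀ s' ∈ S, rk s < rk s' → s ∈ N s')

/-- The conclusion of the main induction. -/
def twConcl {V α : Type*} (rk : V → ℕ) (N : V → Finset V) (c : V → α) (W S : Finset V)
    (R : ℕ) (f : ℕ → V → ℕ) : Prop :=
  (∀ j < R, ∀ v ∈ W, ∀ u ∈ N v, f j u ≠ f j v) ∧
  (∀ v ∈ W, ∃ T : Finset V, (∀ u ∈ T, rk u < rk v) ∧ N v ⊆ T ∧ Set.InjOn c T ∧
    ∀ u, u ∈ W ∨ u ∈ S → rk u < rk v → c u ≠ c v → u ∈ T ∨ ∃ j < R, f j u = f j v) ∧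
  (∀ u ∈ W, ∀ v ∈ W, u ≠ v → c u = c v → ∃ j < R, f j u ≠ f j v)

lemma tw_congr {V α : Type*} {rk : V → ℕ} {N : V → Finset V} {c : V → α} {W S : Finset V}
    {R : ℕ} {f f' : ℕ → V → ℕ} (hg : twGood rk N W S) (h : twConcl rk N c W S R f)
    (hf : ∀ j < R, ∀ v, v ∈ W ∨ v ∈ S → f' j v = f j v) : twConcl rk N c W S R f' := by
  obtain ⟨hA, hB, hC⟩ := h
  refine ⟨?_, ?_, ?_⟩
  · intro j hj v hv u hu
    rw [hf j hj v (Or.inl hv), hf j hj u (hg.1 v hv u hu)]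
    exact hA j hj v hv u hu
  · intro v hv
    obtain ⟨T, h1, h2, h3, h4⟩ := hB v hv
    refine ⟨T, h1, h2, h3, ?_⟩
    intro u hu hlt hc
    rcases h4 u hu hlt hc with h | ⟨j, hj, h⟩
    · left; exact h
    · right
      exact ⟨j, hj, by rw [hf j hj v (Or.inl hv), hf j hj u hu]; exact h⟩
  · intro u hu v hv huv hc
    obtain ⟨j, hj, h⟩ := hC u hu v hv huv hc
    exact ⟨j, hj, by rw [hf j hj v (Or.inl hv), hf j hj u (Or.inl hu)]; exact h⟩

lemma tw_injS {V α : Type*} {rk : V → ℕ} {N : V → Finset V} {c : V → α} {S : Finset V}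
    (hinj : Function.Injective rk) (hc : ∀ v, ∀ u ∈ N v, c u ≠ c v)
    (hS : ∀ s ∈ S, ∀ s' ∈ S, rk s < rk s' → s ∈ N s') : Set.InjOn c S := by
  intro s hs s' hs' h
  rcases lt_trichotomy (rk s) (rk s') with h1 | h1 | h1
  · exact absurd h (hc _ _ (hS s hs s' hs' h1))
  · exact hinj h1
  · exact absurd h.symm (hc _ _ (hS s' hs' s hs h1))

lemma tw_base2 {V α : Type*} [DecidableEq V] {rk : V → ℕ} {N : V → Finset V} {c : V → α}
    (hinj : Function.Injective rk)
    (N1 : ∀ v, ∀ u ∈ N v, rk u < rk v)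
    (hc : ∀ v, ∀ u ∈ N v, c u ≠ c v)
    (S : Finset V) (f0 : ℕ → V → ℕ) (v w : V) (hvw : rk v < rk w)
    (hg : twGood rk N {v, w} S) (F X : ℕ) (hF : ∀ s ∈ S, f0 0 s < F) (T : Finset V)
    (hX : ∀ u ∈ N w, u ∈ S → f0 0 u ≠ X) (hXv : v ∈ N w → F ≠ X)
    (hXC : c v = c w → F ≠ X)
    (hT1 : ∀ u ∈ T, rk u < rk w) (hT2 : N w ⊆ T) (hT3 : Set.InjOn c T)
    (hT4 : ∀ u ∈ S, u ∈ T ∨ f0 0 u = X) (hT5 : c v ≠ c w → v ∈ T ∨ F = X) :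
    ∃ f : ℕ → V → ℕ, (∀ j, ∀ x, x ∉ ({v, w} : Finset V) → f j x = f0 j x) ∧
      twConcl rk N c {v, w} S 1 f := by
  obtain ⟨g1, g2, g3⟩ := hg
  have hne : w ≠ v := by rintro rfl; exact lt_irrefl _ hvw
  have hSv : ∀ s ∈ S, s ≠ v := by
    rintro s hs rfl; exact lt_irrefl _ (g2 s hs s (by simp))
  have hSw : ∀ s ∈ S, s ≠ w := by
    rintro s hs rfl; exact lt_irrefl _ (g2 s hs s (by simp))
  let f : ℕ → V → ℕ := fun j x => if x = v then F else if x = w then X else f0 j x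
  have fv : ∀ j, f j v = F := by intro j; simp [f]
  have fw : ∀ j, f j w = X := by intro j; simp [f, hne]
  have fs : ∀ j, ∀ s ∈ S, f j s = f0 j s := by
    intro j s hs; simp [f, hSv s hs, hSw s hs]
  have hNv : ∀ u ∈ N v, u ∈ S := by
    intro u hu
    have h1 := N1 v u hu
    rcases g1 v (by simp) u hu with h | h
    · exfalso
      rcases Finset.mem_insert.1 h with h | h
      · subst h; omega
      · rw [Finset.mem_singleton] at h; subst h; omega
    · exact h
  refine ⟨f, ?_, ?_, ?_, ?_⟩
  · intro j x hx
    simp only [Finset.mem_insert, Finset.mem_singleton, not_or] at hx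
    simp [f, hx.1, hx.2]
  · intro j hj x hx u hu
    obtain rfl : j = 0 := by omega
    rcases Finset.mem_insert.1 hx with h | h
    · subst h
      have := hNv u hu
      rw [fv, fs _ u this]
      exact (hF u this).ne
    · rw [Finset.mem_singleton] at h
      subst h
      rw [fw]
      by_cases huv : u = v
      · subst huv; rw [fv]; exact hXv hu
      · have huS : u ∈ S := by
          rcases g1 x (by simp) u hu with h | h
          · exfalso
            have h1 := N1 x u hu
            rcases Finset.mem_insert.1 h with h | h
            · exact huv h
            · rw [Finset.mem_singleton] at h; subst h; omega
          · exact h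
        rw [fs _ u huS]
        exact hX u hu huS
  · intro x hx
    rcases Finset.mem_insert.1 hx with h | h
    · subst h
      refine ⟨S, fun u hu => g2 u hu x (by simp), hNv, tw_injS hinj hc g3, ?_⟩
      intro u hu hlt _
      left
      rcases hu with h | h
      · exfalso
        rcases Finset.mem_insert.1 h with h | h
        · subst h; omega
        · rw [Finset.mem_singleton] at h; subst h; omega
      · exact h
    · rw [Finset.mem_singleton] at h
      subst h
      refine ⟨T, hT1, hT2, hT3, ?_⟩
      intro u hu hlt hcu
      rcases hu with h | h
      · rcases Finset.mem_insert.1 h with h | h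
        · subst h
          rcases hT5 hcu with h | h
          · left; exact h
          · right; exact ⟨0, by omega, by rw [fv, fw]; exact h⟩
        · rw [Finset.mem_singleton] at h; subst h; omega
      · rcases hT4 u h with h1 | h1
        · left; exact h1
        · right; exact ⟨0, by omega, by rw [fs _ u h, fw]; exact h1⟩
  · intro x hx y hy hxy hcxy
    refine ⟨0, by omega, ?_⟩
    simp only [Finset.mem_insert, Finset.mem_singleton] at hx hy
    rcases hx with rfl | rfl <;> rcases hy with rfl | rfl
    · exact absurd rfl hxy
    · rw [fv, fw]; exact hXC hcxy
    · rw [fv, fw]; exact (hXC hcxy.symm).symm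
    · exact absurd rfl hxy

lemma tw_base {V α : Type*} [DecidableEq V] {rk : V → ℕ} {N : V → Finset V} {c : V → α}
    (hinj : Function.Injective rk)
    (N1 : ∀ v, ∀ u ∈ N v, rk u < rk v)
    (N4 : ∀ v, ∀ u ∈ N v, ∀ w ∈ N v, rk u < rk w → u ∈ N w)
    (hc : ∀ v, ∀ u ∈ N v, c u ≠ c v)
    (W S : Finset V) (f0 : ℕ → V → ℕ) (hg : twGood rk N W S) (hW : W.card ≤ 2)
    (hf0 : Set.InjOn (f0 0) S) :
    ∃ f : ℕ → V → ℕ, (∀ j, ∀ x, x ∉ W → f j x = f0 j x) ∧ twConcl rk N c W S 1 f := by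
  classical
  let F := S.sup (f0 0) + 1
  have hF : ∀ s ∈ S, f0 0 s < F := fun s hs => Nat.lt_succ_of_le (Finset.le_sup (f := f0 0) hs)
  have hcases : W.card = 0 ∨ W.card = 1 ∨ W.card = 2 := by omega
  rcases hcases with h | h | h
  · rw [Finset.card_eq_zero] at h
    subst h
    refine ⟨f0, fun _ _ _ => rfl, ?_, ?_, ?_⟩ <;> simp
  · rw [Finset.card_eq_one] at h
    obtain ⟨v, rfl⟩ := h
    obtain ⟨g1, g2, g3⟩ := hg
    have hSv : ∀ s ∈ S, s ≠ v := by
      rintro s hs rfl; exact lt_irrefl _ (g2 s hs s (by simp))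
    have hNv : ∀ u ∈ N v, u ∈ S := by
      intro u hu
      have h1 := N1 v u hu
      rcases g1 v (by simp) u hu with h | h
      · rw [Finset.mem_singleton] at h; subst h; omega
      · exact h
    refine ⟨fun j x => if x = v then F else f0 j x, ?_, ?_, ?_, ?_⟩
    · intro j x hx
      rw [Finset.mem_singleton] at hx
      simp [hx]
    · intro j hj x hx u hu
      obtain rfl : j = 0 := by omega
      rw [Finset.mem_singleton] at hx
      subst hx
      have := hNv u hu
      simp only [hSv u this, if_false, if_true]
      exact (hF u this).ne
    · intro x hx
      rw [Finset.mem_singleton] at hx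
      subst hx
      refine ⟨S, fun u hu => g2 u hu x (by simp), hNv, tw_injS hinj hc g3, ?_⟩
      intro u hu hlt _
      left
      rcases hu with h | h
      · rw [Finset.mem_singleton] at h; subst h; omega
      · exact h
    · intro u hu v hv huv
      simp only [Finset.mem_singleton] at hu hv
      exact absurd (hu.trans hv.symm) huv
  · rw [Finset.card_eq_two] at h
    have h' : ∃ v w, rk v < rk w ∧ W = {v, w} := by
      obtain ⟨v, w, hne, h⟩ := h
      rcases lt_trichotomy (rk v) (rk w) with h1 | h1 | h1
      · exact ⟨v, w, h1, h⟩
      · exact absurd (hinj h1) hne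
      · exact ⟨w, v, h1, by rw [h, Finset.pair_comm]⟩
    obtain ⟨v, w, hvw, rfl⟩ := h'
    have hinS := tw_injS hinj hc hg.2.2
    have hSw : ∀ s ∈ S, rk s < rk w := fun s hs => hg.2.1 s hs w (by simp)
    have hSv : ∀ s ∈ S, rk s < rk v := fun s hs => hg.2.1 s hs v (by simp)
    have hNw : ∀ u ∈ N w, u = v ∨ u ∈ S := by
      intro u hu
      have h1 := N1 w u hu
      rcases hg.1 w (by simp) u hu with h | h
      · rcases Finset.mem_insert.1 h with h | h
        · left; exact h
        · rw [Finset.mem_singleton] at h; subst h; omega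
      · right; exact h
    by_cases hv : v ∈ N w
    · have hcv : ∀ u ∈ N w, u ∈ S → c u ≠ c v := by
        intro u hu huS
        exact hc v u (N4 w u hu v hv (hSv u huS))
      let T : Finset V := insert v (S.filter fun s => c s ≠ c v)
      have hT1 : ∀ u ∈ T, rk u < rk w := by
        intro u hu
        rcases Finset.mem_insert.1 hu with h | h
        · rw [h]; exact hvw
        · exact hSw u (Finset.mem_filter.1 h).1
      have hT2 : N w ⊆ T := by
        intro u hu
        rcases hNw u hu with h | h
        · exact Finset.mem_insert.2 (Or.inl h)
        · exact Finset.mem_insert.2 (Or.inr (Finset.mem_filter.2 ⟨h, hcv u hu h⟩))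
      have hT3 : Set.InjOn c T := by
        intro x hx y hy hxy
        rcases Finset.mem_insert.1 hx with h | h <;> rcases Finset.mem_insert.1 hy with h' | h'
        · rw [h, h']
        · exact absurd (by rw [← hxy, h]) (Finset.mem_filter.1 h').2
        · exact absurd (by rw [hxy, h']) (Finset.mem_filter.1 h).2
        · exact hinS (Finset.mem_filter.1 h).1 (Finset.mem_filter.1 h').1 hxy
      have hT5 : v ∈ T := Finset.mem_insert_self _ _
      by_cases hs : ∃ s ∈ S, c s = c v
      · obtain ⟨a, haS, hac⟩ := hs
        refine tw_base2 hinj N1 hc S f0 v w hvw hg F (f0 0 a) hF T ?_ ?_ ?_ hT1 hT2 hT3 ?_ ?_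
        · intro u hu huS h
          have : u = a := hf0 huS haS h
          exact hcv u hu huS (this ▸ hac)
        · intro _; exact (hF a haS).ne'
        · intro h; exact absurd h (hc _ _ hv)
        · intro u hu
          by_cases h : c u = c v
          · right; rw [hinS hu haS (h.trans hac.symm)]
          · left; exact Finset.mem_insert.2 (Or.inr (Finset.mem_filter.2 ⟨hu, h⟩))
        · intro _; left; exact hT5
      · refine tw_base2 hinj N1 hc S f0 v w hvw hg F (F + 1) hF T ?_ ?_ ?_ hT1 hT2 hT3 ?_ ?_
        · intro u hu huS h
          have := hF u huS
          omega
        · intro _; omega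
        · intro h; omega
        · intro u hu
          left
          exact Finset.mem_insert.2 (Or.inr (Finset.mem_filter.2 ⟨hu, fun h => hs ⟨u, hu, h⟩⟩))
        · intro _; left; exact hT5
    · have hT2 : N w ⊆ S := by
        intro u hu
        rcases hNw u hu with h | h
        · subst h; exact absurd hu hv
        · exact h
      by_cases hcc : c v = c w
      · refine tw_base2 hinj N1 hc S f0 v w hvw hg F (F + 1) hF S ?_ ?_ ?_ hSw hT2 hinS ?_ ?_
        · intro u hu huS h
          have := hF u huS
          omega
        · intro _; omega
        · intro h; omega
        · intro u hu; left; exact hu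
        · intro h; exact absurd hcc h
      · refine tw_base2 hinj N1 hc S f0 v w hvw hg F F hF S ?_ ?_ ?_ hSw hT2 hinS ?_ ?_
        · intro u hu huS h
          have := hF u huS
          omega
        · intro h; exact absurd h hv
        · intro h; exact absurd h hcc
        · intro u hu; left; exact hu
        · intro _; right; rfl

end Main

section Step

/-- Slopes of the three groups. -/
def twSlope (q : ℕ) (g : Fin 3) : ZMod q := if g = 0 then 0 else if g = 1 then 1 else -1

lemma twSlope_unit {q : ℕ} (h2 : IsUnit (2 : ZMod q)) (g g' : Fin 3) (h : g ≠ g') :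
    IsUnit (twSlope q g - twSlope q g') := by
  have e1 : (-1 - 1 : ZMod q) = -2 := by ring
  have e2 : (1 + 1 : ZMod q) = 2 := by ring
  fin_cases g <;> fin_cases g' <;> simp_all [twSlope]

lemma tw_newrow {V : Type*} [DecidableEq V] {rk : V → ℕ} {N : V → Finset V} {q : ℕ} [NeZero q]
    {c : V → ZMod q} (hinj : Function.Injective rk)
    (hc : ∀ v, ∀ u ∈ N v, c u ≠ c v)
    (W S S' : Finset V) (hg : twGood rk N W S) (grp : V → Fin 3)
    (hout : ∀ v, v ∉ W → grp v = 0)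
    (h0 : ∀ v ∈ W, grp v = 0 → ∀ u ∈ N v, (u ∈ W ∧ grp u = 0) ∨ u ∈ S)
    (h1 : ∀ v ∈ W, grp v ≠ 0 → ∀ u ∈ N v, (u ∈ W ∧ grp u = grp v) ∨ u ∈ S')
    (f0 : V → ℕ) (hf0 : Set.InjOn f0 S) (i : ZMod q) :
    ∃ g : V → ℕ, (∀ v, v ∉ W → g v = f0 v) ∧ (∀ v ∈ W, ∀ u ∈ N v, g u ≠ g v) ∧
      (∀ u v, u ∈ W ∨ u ∈ S → v ∈ W → u ∉ S' → v ∉ S' →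
        c u - twSlope q (grp u) * i = c v - twSlope q (grp v) * i → g u = g v) ∧
      (∀ u ∈ W, ∀ v ∈ W, u ≠ v →
        c u - twSlope q (grp u) * i ≠ c v - twSlope q (grp v) * i → g u ≠ g v) := by
  classical
  let F := S.sup f0 + 1
  have hF : ∀ s ∈ S, f0 s < F := fun s hs => Nat.lt_succ_of_le (Finset.le_sup (f := f0) hs)
  have hSW : ∀ s ∈ S, s ∉ W := fun s hs hw => lt_irrefl _ (hg.2.1 s hs s hw)
  have hinS := tw_injS hinj hc hg.2.2
  have hpc : ∃ pc : ZMod q → ℕ, (∀ x y, pc x = pc y → x = y) ∧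
      (∀ p ∈ S, p ∉ S' → pc (c p) = f0 p) ∧ (∀ s ∈ S, s ∈ S' → ∀ x, pc x ≠ f0 s) ∧
      (∀ x n, pc x ≠ F + Nat.pair 1 n) := by
    have hex : ∀ x : ZMod q, ∃ n : ℕ, (∃ p ∈ S, p ∉ S' ∧ c p = x ∧ n = f0 p) ∨
        ((∀ p ∈ S, p ∉ S' → c p ≠ x) ∧ n = F + Nat.pair 0 x.val) := by
      intro x
      by_cases h : ∃ p ∈ S, p ∉ S' ∧ c p = x
      · obtain ⟨p, hp1, hp2, hp3⟩ := h
        exact ⟨f0 p, Or.inl ⟨p, hp1, hp2, hp3, rfl⟩⟩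
      · push Not at h
        exact ⟨_, Or.inr ⟨h, rfl⟩⟩
    choose pc hpc using hex
    refine ⟨pc, ?_, ?_, ?_, ?_⟩
    · intro x y hxy
      rcases hpc x with ⟨p, p1, p2, p3, p4⟩ | ⟨_, p4⟩ <;>
        rcases hpc y with ⟨r, r1, r2, r3, r4⟩ | ⟨_, r4⟩
      · have : p = r := hf0 p1 r1 (by rw [← p4, ← r4, hxy])
        rw [← p3, ← r3, this]
      · have := hF p p1; omega
      · have := hF r r1; omega
      · have : Nat.pair 0 x.val = Nat.pair 0 y.val := by omega
        rw [Nat.pair_eq_pair] at this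
        exact ZMod.val_injective q this.2
    · intro p hp hp'
      rcases hpc (c p) with ⟨r, r1, r2, r3, r4⟩ | ⟨h, _⟩
      · rw [r4, hinS r1 hp r3]
      · exact absurd rfl (h p hp hp')
    · intro s hs hs' x h
      rcases hpc x with ⟨r, r1, r2, r3, r4⟩ | ⟨_, r4⟩
      · have : r = s := hf0 r1 hs (by rw [← r4, h])
        exact r2 (this ▸ hs')
      · have := hF s hs; omega
    · intro x n h
      rcases hpc x with ⟨r, r1, r2, r3, r4⟩ | ⟨_, r4⟩
      · have := hF r r1; omega
      · have : Nat.pair 0 x.val = Nat.pair 1 n := by omega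
        rw [Nat.pair_eq_pair] at this
        omega
  obtain ⟨pc, pc1, pc2, pc3, pc4⟩ := hpc
  let key : V → ZMod q := fun v => c v - twSlope q (grp v) * i
  let g : V → ℕ := fun v => if v ∈ W then
    (if v ∈ S' then F + Nat.pair 1 (rk v) else pc (key v)) else f0 v
  have gk : ∀ v ∈ W, v ∈ S' → g v = F + Nat.pair 1 (rk v) := by
    intro v h h'; simp [g, h, h']
  have gp : ∀ v ∈ W, v ∉ S' → g v = pc (key v) := by
    intro v h h'; simp [g, h, h']
  have go : ∀ v, v ∉ W → g v = f0 v := by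
    intro v h; simp [g, h]
  have keyS : ∀ s ∈ S, key s = c s := by
    intro s hs
    simp [key, hout s (hSW s hs), twSlope]
  have key0 : ∀ s, grp s = 0 → key s = c s := by
    intro s hs
    simp [key, hs, twSlope]
  have sep : ∀ u ∈ W, ∀ v ∈ W, u ≠ v → key u ≠ key v → g u ≠ g v := by
    intro u hu v hv huv hk
    by_cases hu' : u ∈ S' <;> by_cases hv' : v ∈ S'
    · rw [gk u hu hu', gk v hv hv']
      intro h
      have : Nat.pair 1 (rk u) = Nat.pair 1 (rk v) := by omega
      rw [Nat.pair_eq_pair] at this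
      exact huv (hinj this.2)
    · rw [gk u hu hu', gp v hv hv']
      exact (pc4 _ _).symm
    · rw [gp u hu hu', gk v hv hv']
      exact pc4 _ _
    · rw [gp u hu hu', gp v hv hv']
      exact fun h => hk (pc1 _ _ h)
  refine ⟨g, go, ?_, ?_, sep⟩
  · intro v hv u hu
    have hcuv := hc v u hu
    have huv : u ≠ v := by rintro rfl; exact hcuv rfl
    by_cases huW : u ∈ W
    · by_cases hv' : v ∈ S'
      · by_cases hu' : u ∈ S'
        · rw [gk u huW hu', gk v hv hv']
          intro h
          have : Nat.pair 1 (rk u) = Nat.pair 1 (rk v) := by omega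
          rw [Nat.pair_eq_pair] at this
          exact huv (hinj this.2)
        · rw [gp u huW hu', gk v hv hv']
          exact pc4 _ _
      · by_cases hu' : u ∈ S'
        · rw [gk u huW hu', gp v hv hv']
          exact (pc4 _ _).symm
        · apply sep u huW v hv huv
          have hgrp : grp u = grp v := by
            by_cases hz : grp v = 0
            · rcases h0 v hv hz u hu with h | h
              · rw [h.2, hz]
              · exact absurd huW (hSW u h)
            · rcases h1 v hv hz u hu with h | h
              · exact h.2
              · exact absurd h hu'
          simp only [key, hgrp]
          intro h
          exact hcuv (sub_left_injective h)
    · have huS : u ∈ S := (hg.1 v hv u hu).resolve_left huW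
      rw [go u huW]
      by_cases hv' : v ∈ S'
      · rw [gk v hv hv']
        have := hF u huS
        omega
      · rw [gp v hv hv']
        by_cases hu' : u ∈ S'
        · exact (pc3 u huS hu' _).symm
        · have hz : grp v = 0 := by
            by_contra hz
            rcases h1 v hv hz u hu with h | h
            · exact huW h.1
            · exact hu' h
          rw [key0 v hz, ← pc2 u huS hu']
          exact fun h => hcuv (pc1 _ _ h)
  · intro u v hu hv hu' hv' hk
    change key u = key v at hk
    rw [gp v hv hv']
    by_cases huW : u ∈ W
    · rw [gp u huW hu', hk]
    · have huS : u ∈ S := hu.resolve_left huW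
      rw [go u huW, ← hk, keyS u huS, pc2 u huS hu']

lemma tw_step {V : Type*} [DecidableEq V] {rk : V → ℕ} {N : V → Finset V} {q : ℕ} [NeZero q]
    [Nontrivial (ZMod q)] (h2 : IsUnit (2 : ZMod q))
    {c : V → ZMod q} (hinj : Function.Injective rk)
    (N1 : ∀ v, ∀ u ∈ N v, rk u < rk v)
    (N4 : ∀ v, ∀ u ∈ N v, ∀ w ∈ N v, rk u < rk w → u ∈ N w)
    (hc : ∀ v, ∀ u ∈ N v, c u ≠ c v) (R M : ℕ)
    (IH : ∀ (W S : Finset V) (f0 : ℕ → V → ℕ), twGood rk N W S → W.card ≤ M →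
      (∀ j < R, Set.InjOn (f0 j) S) →
      ∃ f : ℕ → V → ℕ, (∀ j, ∀ x, x ∉ W → f j x = f0 j x) ∧ twConcl rk N c W S R f)
    (W S : Finset V) (f0 : ℕ → V → ℕ) (hg : twGood rk N W S) (hW : W.card ≤ 2 * M)
    (hf0 : ∀ j < R + q, Set.InjOn (f0 j) S) :
    ∃ f : ℕ → V → ℕ, (∀ j, ∀ x, x ∉ W → f j x = f0 j x) ∧ twConcl rk N c W S (R + q) f := by
  classical
  obtain ⟨grp, S', hM, hout, h0, h1, hS1, hS2, hS3⟩ :=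
    tw_split hinj N1 N4 W S M hg.1 hg.2.1 hg.2.2 hW
  have hSW : ∀ s ∈ S, s ∉ W := fun s hs hw => lt_irrefl _ (hg.2.1 s hs s hw)
  let Wg : Fin 3 → Finset V := fun g => W.filter fun v => grp v = g
  have memW : ∀ g v, v ∈ Wg g ↔ v ∈ W ∧ grp v = g := fun g v => Finset.mem_filter
  have good0 : twGood rk N (Wg 0) S := by
    refine ⟨?_, ?_, hg.2.2⟩
    · intro v hv u hu
      rw [memW] at hv
      rw [memW]
      exact h0 v hv.1 hv.2 u hu
    · intro s hs w hw
      exact hg.2.1 s hs w ((memW _ _).1 hw).1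
  have goodC : ∀ g, g ≠ 0 → twGood rk N (Wg g) S' := by
    intro g hg0
    refine ⟨?_, ?_, hS3⟩
    · intro v hv u hu
      rw [memW] at hv
      rw [memW]
      rcases h1 v hv.1 (by rw [hv.2]; exact hg0) u hu with h | h
      · left; exact ⟨h.1, h.2.trans hv.2⟩
      · right; exact h
    · intro s hs w hw
      rw [memW] at hw
      exact hS2 s hs w hw.1 (by rw [hw.2]; exact hg0)
  obtain ⟨f1, e1, c1⟩ := IH (Wg 0) S f0 good0 (hM 0) (fun j hj => hf0 j (by omega))
  have inj1 : ∀ j < R, Set.InjOn (f1 j) S' := by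
    intro j hj
    have hlt : ∀ s ∈ S', ∀ s' ∈ S', rk s < rk s' → f1 j s ≠ f1 j s' := by
      intro s hs s' hs' hlt
      rcases (hS1 s' hs').2 with h | h
      · exact c1.1 j hj s' ((memW _ _).2 ⟨h, (hS1 s' hs').1⟩) s (hS3 s hs s' hs' hlt)
      · have hsS : s ∈ S := by
          rcases (hS1 s hs).2 with h' | h'
          · have := hg.2.1 s' h s h'
            omega
          · exact h'
        rw [e1 j s (fun hh => hSW s hsS ((memW _ _).1 hh).1),
          e1 j s' (fun hh => hSW s' h ((memW _ _).1 hh).1)]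
        intro h3
        have := hf0 j (by omega) hsS h h3
        subst this
        exact lt_irrefl _ hlt
    intro s hs s' hs' h
    rcases lt_trichotomy (rk s) (rk s') with h3 | h3 | h3
    · exact absurd h (hlt s hs s' hs' h3)
    · exact hinj h3
    · exact absurd h.symm (hlt s' hs' s hs h3)
  have hS'g : ∀ g, g ≠ 0 → ∀ s ∈ S', s ∉ Wg g := by
    intro g hg0 s hs h
    rw [memW] at h
    exact hg0 (h.2.symm.trans (hS1 s hs).1)
  obtain ⟨f2, e2, c2⟩ := IH (Wg 1) S' f1 (goodC 1 (by decide)) (hM 1) inj1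
  have inj2 : ∀ j < R, Set.InjOn (f2 j) S' := by
    intro j hj s hs s' hs' h
    rw [e2 j s (hS'g 1 (by decide) s hs), e2 j s' (hS'g 1 (by decide) s' hs')] at h
    exact inj1 j hj hs hs' h
  obtain ⟨f3, e3, c3⟩ := IH (Wg 2) S' f2 (goodC 2 (by decide)) (hM 2) inj2
  have hdis : ∀ g g', g ≠ g' → ∀ v ∈ Wg g, v ∉ Wg g' := by
    intro g g' hgg v hv hv'
    rw [memW] at hv hv'
    exact hgg (hv.2.symm.trans hv'.2)
  have hSg : ∀ g, ∀ s ∈ S, s ∉ Wg g := fun g s hs h => hSW s hs ((memW _ _).1 h).1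
  have c1' : twConcl rk N c (Wg 0) S R f3 := by
    refine tw_congr good0 c1 ?_
    intro j _ v hv
    rcases hv with h | h
    · rw [e3 j v (hdis 0 2 (by decide) v h), e2 j v (hdis 0 1 (by decide) v h)]
    · rw [e3 j v (hSg 2 v h), e2 j v (hSg 1 v h)]
  have c2' : twConcl rk N c (Wg 1) S' R f3 := by
    refine tw_congr (goodC 1 (by decide)) c2 ?_
    intro j _ v hv
    rcases hv with h | h
    · rw [e3 j v (hdis 1 2 (by decide) v h)]
    · rw [e3 j v (hS'g 2 (by decide) v h)]
  have call : ∀ g, twConcl rk N c (Wg g) (if g = 0 then S else S') R f3 := by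
    intro g
    have hg : g = 0 ∨ g = 1 ∨ g = 2 := by fin_cases g <;> simp
    rcases hg with rfl | rfl | rfl
    · exact c1'
    · exact c2'
    · exact c3
  have e3' : ∀ j x, x ∉ W → f3 j x = f0 j x := by
    intro j x hx
    have hx' : ∀ g, x ∉ Wg g := fun g h => hx ((memW _ _).1 h).1
    rw [e3 j x (hx' 2), e2 j x (hx' 1), e1 j x (hx' 0)]
  have hnew : ∀ j, ∃ g : V → ℕ, (∀ v, v ∉ W → g v = f0 j v) ∧ (j < R + q →
      (∀ v ∈ W, ∀ u ∈ N v, g u ≠ g v) ∧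
      (∀ u v, u ∈ W ∨ u ∈ S → v ∈ W → u ∉ S' → v ∉ S' →
        c u - twSlope q (grp u) * (j : ZMod q) = c v - twSlope q (grp v) * (j : ZMod q) →
          g u = g v) ∧
      (∀ u ∈ W, ∀ v ∈ W, u ≠ v →
        c u - twSlope q (grp u) * (j : ZMod q) ≠ c v - twSlope q (grp v) * (j : ZMod q) →
          g u ≠ g v)) := by
    intro j
    by_cases hj : j < R + q
    · obtain ⟨g, a1, a2, a3, a4⟩ := tw_newrow hinj hc W S S' hg grp hout h0 h1 (f0 j)
        (hf0 j hj) (j : ZMod q)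
      exact ⟨g, a1, fun _ => ⟨a2, a3, a4⟩⟩
    · exact ⟨f0 j, fun _ _ => rfl, fun h => absurd h hj⟩
  choose g hg1 hg2 using hnew
  let f : ℕ → V → ℕ := fun j v => if j < R then f3 j v else g j v
  have fold : ∀ j, j < R → ∀ v, f j v = f3 j v := by intro j hj v; simp [f, hj]
  have fnew : ∀ j, ¬ j < R → ∀ v, f j v = g j v := by intro j hj v; simp [f, hj]
  have hrow : ∀ i : ZMod q, ∃ j, ¬ j < R ∧ j < R + q ∧ (j : ZMod q) = i := by
    intro i
    refine ⟨R + (i - (R : ZMod q)).val, by omega, ?_, ?_⟩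
    · have := ZMod.val_lt (i - (R : ZMod q)); omega
    · push_cast
      rw [ZMod.natCast_zmod_val]; ring
  refine ⟨f, ?_, ?_, ?_, ?_⟩
  · intro j x hx
    by_cases hj : j < R
    · rw [fold j hj, e3' j x hx]
    · rw [fnew j hj, hg1 j x hx]
  · intro j hj v hv u hu
    by_cases hjR : j < R
    · rw [fold j hjR, fold j hjR]
      exact (call (grp v)).1 j hjR v ((memW _ _).2 ⟨hv, rfl⟩) u hu
    · rw [fnew j hjR, fnew j hjR]
      exact (hg2 j hj).1 v hv u hu
  · intro v hv
    obtain ⟨T, t1, t2, t3, t4⟩ := (call (grp v)).2.1 v ((memW _ _).2 ⟨hv, rfl⟩)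
    refine ⟨T, t1, t2, t3, ?_⟩
    intro u hu hlt hcuv
    by_cases hin : u ∈ Wg (grp v) ∨ u ∈ (if grp v = 0 then S else S')
    · rcases t4 u hin hlt hcuv with h | ⟨j, hj, h⟩
      · left; exact h
      · right
        exact ⟨j, by omega, by rw [fold j hj, fold j hj]; exact h⟩
    · right
      rw [not_or] at hin
      obtain ⟨n1, n2⟩ := hin
      have hgrp : grp u ≠ grp v := by
        intro h
        by_cases huW : u ∈ W
        · exact n1 ((memW _ _).2 ⟨huW, h⟩)
        · have huS := hu.resolve_left huW
          rw [hout u huW] at h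
          rw [if_pos h.symm] at n2
          exact n2 huS
      have hu' : u ∉ S' := by
        intro h
        by_cases hz : grp v = 0
        · exact hgrp ((hS1 u h).1.trans hz.symm)
        · rw [if_neg hz] at n2
          exact n2 h
      have hv' : v ∉ S' := by
        intro h
        have hz := (hS1 v h).1
        rw [hz] at hgrp
        have huW : u ∈ W := by
          by_contra huW
          exact hgrp (hout u huW)
        have := hS2 v h u huW hgrp
        omega
      obtain ⟨d, hd⟩ := twSlope_unit h2 _ _ hgrp
      obtain ⟨j, j1, j2, j3⟩ := hrow ((↑d⁻¹ : ZMod q) * (c u - c v))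
      refine ⟨j, j2, ?_⟩
      rw [fnew j j1, fnew j j1]
      apply (hg2 j j2).2.1 u v hu hv hu' hv'
      have hkey : (twSlope q (grp u) - twSlope q (grp v)) * (j : ZMod q) = c u - c v := by
        rw [j3, ← hd, ← mul_assoc, Units.mul_inv, one_mul]
      linear_combination -hkey
  · intro u hu v hv huv hcuv
    by_cases hgrp : grp u = grp v
    · obtain ⟨j, hj, h⟩ := (call (grp v)).2.2 u ((memW _ _).2 ⟨hu, hgrp⟩) v
        ((memW _ _).2 ⟨hv, rfl⟩) huv hcuv
      exact ⟨j, by omega, by rw [fold j hj, fold j hj]; exact h⟩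
    · obtain ⟨j, j1, j2, j3⟩ := hrow 1
      refine ⟨j, j2, ?_⟩
      rw [fnew j j1, fnew j j1]
      apply (hg2 j j2).2.2 u hu v hv huv
      rw [j3, hcuv]
      intro h
      have hn := (twSlope_unit h2 _ _ hgrp).ne_zero
      apply hn
      linear_combination -h

lemma tw_main {V : Type*} [DecidableEq V] {rk : V → ℕ} {N : V → Finset V} {q : ℕ} [NeZero q]
    [Nontrivial (ZMod q)] (h2 : IsUnit (2 : ZMod q))
    {c : V → ZMod q} (hinj : Function.Injective rk)
    (N1 : ∀ v, ∀ u ∈ N v, rk u < rk v)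
    (N4 : ∀ v, ∀ u ∈ N v, ∀ w ∈ N v, rk u < rk w → u ∈ N w)
    (hc : ∀ v, ∀ u ∈ N v, c u ≠ c v) (L : ℕ) :
    ∀ (W S : Finset V) (f0 : ℕ → V → ℕ), twGood rk N W S → W.card ≤ 2 ^ (L + 1) →
      (∀ j < q * L + 1, Set.InjOn (f0 j) S) →
      ∃ f : ℕ → V → ℕ, (∀ j, ∀ x, x ∉ W → f j x = f0 j x) ∧
        twConcl rk N c W S (q * L + 1) f := by
  induction L with
  | zero =>
    intro W S f0 hg hW hf0
    simpa using tw_base hinj N1 N4 hc W S f0 hg (by simpa using hW) (hf0 0 (by simp))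
  | succ L ih =>
    intro W S f0 hg hW hf0
    have e : q * (L + 1) + 1 = q * L + 1 + q := by ring
    rw [e] at hf0 ⊢
    exact tw_step h2 hinj N1 N4 hc _ _ ih W S f0 hg (by rw [pow_succ] at hW; omega) hf0

end Step

section Final

lemma tw_lastrow {V : Type*} [Fintype V] [DecidableEq V] (G : SimpleGraph V) {m : ℕ} [NeZero m]
    {rk : V → ℕ} (hinj : Function.Injective rk) (χ : V → ZMod m) (T : V → Finset V)
    (hadj : ∀ u v, G.Adj u v → rk u < rk v → u ∈ T v)
    (hχ : ∀ u v, G.Adj u v → χ u ≠ χ v)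
    (T1 : ∀ v, ∀ u ∈ T v, rk u < rk v) (T3 : ∀ v, Set.InjOn χ (T v)) (r : ZMod m) :
    ∃ g : V → ℕ, (∀ u v, G.Adj u v → g u ≠ g v) ∧
      (∀ u v, χ u = χ v → χ u + χ u = r → g u = g v) ∧
      (∀ u v, u ∈ T v → ¬ G.Adj u v → χ u ≠ χ v → χ u + χ v = r → g u = g v) ∧
      (∀ u v, χ u ≠ χ v → χ u + χ v ≠ r → g u ≠ g v) := by
  classical
  have hp : ∀ v, ∃ p, (p ∈ T v ∧ χ p + χ v = r ∧ ¬ G.Adj p v) ∨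
      (p = v ∧ ∀ s ∈ T v, χ s + χ v = r → G.Adj s v) := by
    intro v
    by_cases h : ∃ p, p ∈ T v ∧ χ p + χ v = r ∧ ¬ G.Adj p v
    · obtain ⟨p, hp⟩ := h
      exact ⟨p, Or.inl hp⟩
    · push Not at h
      exact ⟨v, Or.inr ⟨rfl, h⟩⟩
  choose ptr hptr using hp
  have hfix : ∀ k v, rk v ≤ k → ptr (ptr^[k] v) = ptr^[k] v := by
    intro k
    induction k with
    | zero =>
      intro v hv
      rcases hptr v with h | h
      · have := T1 _ _ h.1; omega
      · exact h.1
    | succ k ih =>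
      intro v hv
      rw [Function.iterate_succ_apply]
      rcases hptr v with h | h
      · have := T1 _ _ h.1
        exact ih _ (by omega)
      · rw [h.1, Function.iterate_fixed h.1]
        exact h.1
  have hinv : ∀ k v, (χ (ptr^[k] v) = χ v ∨ χ (ptr^[k] v) + χ v = r) ∧
      rk (ptr^[k] v) ≤ rk v := by
    intro k
    induction k with
    | zero => intro v; simp
    | succ k ih =>
      intro v
      rw [Function.iterate_succ_apply']
      obtain ⟨i1, i2⟩ := ih v
      rcases hptr (ptr^[k] v) with h | h
      · have := T1 _ _ h.1
        refine ⟨?_, by omega⟩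
        rcases i1 with h1 | h1
        · right; rw [← h1]; exact h.2.1
        · left; have := h.2.1; linear_combination this - h1
      · rw [h.1]; exact ⟨i1, i2⟩
  let K := Finset.univ.sup rk
  have hK : ∀ v, rk v ≤ K := fun v => Finset.le_sup (f := rk) (Finset.mem_univ v)
  let root : V → V := ptr^[K]
  have hroot : ∀ v, root (ptr v) = root v := by
    intro v
    change ptr^[K] (ptr v) = ptr^[K] v
    rw [← Function.iterate_succ_apply, Function.iterate_succ_apply', hfix K v (hK v)]
  let g : V → ℕ := fun v => if χ v + χ v = r then Nat.pair 0 (χ v).val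
    else Nat.pair 1 (rk (root v))
  have g0 : ∀ v, χ v + χ v = r → g v = Nat.pair 0 (χ v).val := by
    intro v h; simp [g, h]
  have g1 : ∀ v, χ v + χ v ≠ r → g v = Nat.pair 1 (rk (root v)) := by
    intro v h; simp [g, h]
  have sep : ∀ u v, χ u ≠ χ v → χ u + χ v ≠ r → g u ≠ g v := by
    intro u v h1 h2 h
    by_cases hu : χ u + χ u = r <;> by_cases hv : χ v + χ v = r
    · rw [g0 u hu, g0 v hv, Nat.pair_eq_pair] at h
      exact h1 (ZMod.val_injective m h.2)
    · rw [g0 u hu, g1 v hv, Nat.pair_eq_pair] at h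
      omega
    · rw [g1 u hu, g0 v hv, Nat.pair_eq_pair] at h
      omega
    · rw [g1 u hu, g1 v hv, Nat.pair_eq_pair] at h
      have hr : root u = root v := hinj h.2
      have a1 : χ (root u) = χ u ∨ χ (root u) + χ u = r := (hinv K u).1
      have a2 : χ (root v) = χ v ∨ χ (root v) + χ v = r := (hinv K v).1
      rw [hr] at a1
      rcases a1 with a1 | a1 <;> rcases a2 with a2 | a2
      · exact h1 (a1.symm.trans a2)
      · apply h2; rw [← a1]; exact a2
      · apply h2; rw [← a2, add_comm]; exact a1
      · apply h1; linear_combination a1 - a2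
  have hpl : ∀ u v, G.Adj u v → rk u < rk v → g u ≠ g v := by
    intro u v huv hlt
    by_cases hr : χ u + χ v = r
    · have hne := hχ u v huv
      have hu : χ u + χ u ≠ r := fun h => hne (by linear_combination h - hr)
      have hv : χ v + χ v ≠ r := fun h => hne (by linear_combination hr - h)
      rw [g1 u hu, g1 v hv]
      intro h
      rw [Nat.pair_eq_pair] at h
      have hpv : ptr v = v := by
        rcases hptr v with h3 | h3
        · exfalso
          have : ptr v = u := T3 v h3.1 (hadj u v huv hlt) (by linear_combination h3.2.1 - hr)
          rw [this] at h3
          exact h3.2.2 huv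
        · exact h3.1
      have hrv : root v = v := Function.iterate_fixed hpv K
      have hru : rk (root u) ≤ rk u := (hinv K u).2
      rw [hrv] at h
      omega
    · exact sep u v (hχ u v huv) hr
  refine ⟨g, ?_, ?_, ?_, sep⟩
  · intro u v huv
    rcases lt_trichotomy (rk u) (rk v) with h | h | h
    · exact hpl u v huv h
    · exact absurd (hinj h) huv.ne
    · exact (hpl v u huv.symm h).symm
  · intro u v h h'
    rw [g0 u h', g0 v (by rw [← h]; exact h'), h]
  · intro u v hu huv hne hr
    have hu' : χ u + χ u ≠ r := fun h => hne (by linear_combination h - hr)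
    have hv' : χ v + χ v ≠ r := fun h => hne (by linear_combination hr - h)
    have hpv : ptr v = u := by
      rcases hptr v with h3 | h3
      · exact T3 v h3.1 hu (by linear_combination h3.2.1 - hr)
      · exact absurd (h3.2 u hu hr) huv
    rw [g1 u hu', g1 v hv', ← hroot v, hpv]

lemma tw_encoding {V : Type*} [Fintype V] [DecidableEq V] (G : SimpleGraph V)
    (t : ℕ) (ht : 1 ≤ t) (htw : HasTreewidthLE G t) :
    ∃ l, l ≤ (t + 2) * (Nat.log 2 (Fintype.card V) + 1) ∧
      ∃ φ : V → Fin l → ℕ, IsEncoding G l φ := by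
  classical
  obtain ⟨rk, N, hinj, N1, N2, N3, N4⟩ := twp_peo G t htw
  obtain ⟨χ, hχ⟩ := twp_colour t rk N N1 N3
  have hq : ∃ q, t + 1 ≤ q ∧ q ≤ t + 2 ∧ q % 2 = 1 := by
    rcases Nat.even_or_odd t with h | h
    · rw [Nat.even_iff] at h
      exact ⟨t + 1, by omega, by omega, by omega⟩
    · rw [Nat.odd_iff] at h
      exact ⟨t + 2, by omega, by omega, by omega⟩
  obtain ⟨q, q1, q2, q3⟩ := hq
  have : NeZero q := ⟨by omega⟩
  have : Fact (1 < q) := ⟨by omega⟩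
  have : Fact (1 < t + 1) := ⟨by omega⟩
  have hu2 : IsUnit (2 : ZMod q) := by
    have := (ZMod.isUnit_iff_coprime 2 q).2
      ((Nat.coprime_two_left).2 (Nat.odd_iff.2 q3))
    simpa using this
  let c : V → ZMod q := fun v => ((χ v).val : ZMod q)
  have hcχ : ∀ u v, c u = c v ↔ χ u = χ v := by
    intro u v
    constructor
    · intro h
      have h1 := congrArg ZMod.val h
      have b1 := ZMod.val_lt (χ u)
      have b2 := ZMod.val_lt (χ v)
      simp only [c] at h1
      rw [ZMod.val_natCast_of_lt (by omega), ZMod.val_natCast_of_lt (by omega)] at h1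
      exact ZMod.val_injective _ h1
    · intro h; simp only [c, h]
  have hc : ∀ v, ∀ u ∈ N v, c u ≠ c v := by
    intro v u hu h
    exact hχ v u hu ((hcχ u v).1 h)
  set L := Nat.log 2 (Fintype.card V) with hL
  obtain ⟨f, -, hA, hB, hC⟩ := tw_main hu2 hinj N1 N4 hc L Finset.univ ∅ (fun _ _ => 0)
    ⟨by simp, by simp, by simp⟩
    (by rw [Finset.card_univ]; exact (Nat.lt_pow_succ_log_self (by norm_num) _).le) (by simp)
  have hB' : ∀ v, ∃ T : Finset V, (∀ u ∈ T, rk u < rk v) ∧ N v ⊆ T ∧ Set.InjOn c T ∧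
      ∀ u, rk u < rk v → c u ≠ c v → u ∈ T ∨ ∃ j < q * L + 1, f j u = f j v := by
    intro v
    obtain ⟨T, h1, h2, h3, h4⟩ := hB v (Finset.mem_univ v)
    exact ⟨T, h1, h2, h3, fun u => h4 u (Or.inl (Finset.mem_univ u))⟩
  choose T T1 T2 T3 T4 using hB'
  have hlast := tw_lastrow G hinj χ T (fun u v h h' => T2 v (N2 u v h h'))
    (by
      intro u v huv
      rcases lt_trichotomy (rk u) (rk v) with h | h | h
      · exact hχ v u (N2 u v huv h)
      · exact absurd (hinj h) huv.ne
      · exact (hχ u v (N2 v u huv.symm h)).symm)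
    T1 (fun v x hx y hy h => T3 v hx hy ((hcχ x y).2 h))
  choose g gA gB gC gD using hlast
  let R := q * L + 1
  let row : ℕ → V → ℕ := fun j v => if j < R then f j v else g (((j - R : ℕ) : ZMod (t + 1))) v
  have row1 : ∀ j < R, ∀ v, row j v = f j v := by intro j hj v; simp [row, hj]
  have row2 : ∀ r : ZMod (t + 1), ∃ j < R + (t + 1), ∀ v, row j v = g r v := by
    intro r
    have := ZMod.val_lt r
    refine ⟨R + r.val, by omega, ?_⟩
    intro v
    have h1 : ¬ (R + r.val < R) := by omega
    simp only [row, h1, if_false]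
    rw [Nat.add_sub_cancel_left, ZMod.natCast_zmod_val]
  refine ⟨R + (t + 1), ?_, fun v i => row i v, ?_, ?_⟩
  · have : q * L ≤ (t + 2) * L := Nat.mul_le_mul_right _ q2
    have e : (t + 2) * (L + 1) = (t + 2) * L + (t + 2) := by ring
    simp only [R]
    omega
  · intro u v huv
    by_contra hne
    by_cases hcc : χ u = χ v
    · obtain ⟨j, hj, h⟩ := hC u (Finset.mem_univ _) v (Finset.mem_univ _) hne ((hcχ u v).2 hcc)
      apply h
      have := congrFun huv ⟨j, by omega⟩
      simp only at this
      rwa [row1 j hj, row1 j hj] at this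
    · obtain ⟨j, hj, h⟩ := row2 (χ u + χ v + 1)
      have := congrFun huv ⟨j, hj⟩
      simp only at this
      rw [h, h] at this
      exact gD _ u v hcc (by simp) this
  · have hnon : ∀ u v, rk u < rk v → ¬ G.Adj u v → ∃ j < R + (t + 1), row j u = row j v := by
      intro u v hlt huv
      by_cases hcc : χ u = χ v
      · obtain ⟨j, hj, h⟩ := row2 (χ u + χ u)
        exact ⟨j, hj, by rw [h, h]; exact gB _ u v hcc rfl⟩
      · rcases T4 v u hlt (fun h => hcc ((hcχ u v).1 h)) with h1 | ⟨j, hj, h1⟩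
        · obtain ⟨j, hj, h⟩ := row2 (χ u + χ v)
          exact ⟨j, hj, by rw [h, h]; exact gC _ u v h1 huv hcc rfl⟩
        · exact ⟨j, by omega, by rw [row1 j hj, row1 j hj]; exact h1⟩
    intro u v hne
    constructor
    · intro huv i
      by_cases hi : (i : ℕ) < R
      · simp only [row1 i hi]
        rcases lt_trichotomy (rk u) (rk v) with h | h | h
        · exact hA i hi v (Finset.mem_univ _) u (N2 u v huv h)
        · exact absurd (hinj h) hne
        · exact (hA i hi u (Finset.mem_univ _) v (N2 v u huv.symm h)).symm
      · simp only [row, hi, if_false]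
        exact gA _ u v huv
    · intro h
      by_contra huv
      rcases lt_trichotomy (rk u) (rk v) with h1 | h1 | h1
      · obtain ⟨j, hj, h2⟩ := hnon u v h1 huv
        exact h ⟨j, hj⟩ h2
      · exact hne (hinj h1)
      · obtain ⟨j, hj, h2⟩ := hnon v u h1 (fun h => huv h.symm)
        exact h ⟨j, hj⟩ h2.symm

lemma tw_encoding_zero {V : Type*} [Fintype V] [DecidableEq V] (G : SimpleGraph V)
    (htw : HasTreewidthLE G 0) :
    ∃ φ : V → Fin 2 → ℕ, IsEncoding G 2 φ := by
  obtain ⟨rk, N, hinj, N1, N2, N3, N4⟩ := twp_peo G 0 htw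
  have hN : ∀ u v, u ∉ N v := by
    intro u v hu
    have := N3 v
    rw [Nat.le_zero, Finset.card_eq_zero] at this
    rw [this] at hu
    simp at hu
  refine ⟨fun v => ![0, rk v], ?_, ?_⟩
  · intro u v h
    have := congrFun h 1
    exact hinj (by simpa using this)
  · intro u v hne
    constructor
    · intro huv
      exfalso
      rcases lt_trichotomy (rk u) (rk v) with h | h | h
      · exact hN _ _ (N2 u v huv h)
      · exact hne (hinj h)
      · exact hN _ _ (N2 v u huv.symm h)
    · intro h
      exact absurd rfl (h 0)

end Final

/-- Every graph `G` on `n` vertices with treewidth at most `t` has product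
dimension at most `(t+2)(log₂ n + 1)`. -/
theorem pdim_treewidth {V : Type*} [Fintype V] [DecidableEq V] (G : SimpleGraph V)
    (t : ℕ) (htw : HasTreewidthLE G t) :
    (pdim G : ℝ) ≤ (t + 2) * (Real.logb 2 (Fintype.card V) + 1) := by
  have hex : ∃ l, l ≤ (t + 2) * (Nat.log 2 (Fintype.card V) + 1) ∧
      ∃ φ : V → Fin l → ℕ, IsEncoding G l φ := by
    rcases Nat.eq_zero_or_pos t with h | h
    · subst h
      exact ⟨2, by omega, tw_encoding_zero G htw⟩
    · exact tw_encoding G t h htw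
  obtain ⟨l, hl, hφ⟩ := hex
  have h1 : pdim G ≤ l := Nat.sInf_le hφ
  have h2 : (pdim G : ℝ) ≤ (((t + 2) * (Nat.log 2 (Fintype.card V) + 1) : ℕ) : ℝ) := by
    exact_mod_cast h1.trans hl
  have h3 := Real.natLog_le_logb (Fintype.card V) 2
  push_cast at h2 h3
  refine h2.trans ?_
  gcongr
end

section
/- Every k-degenerate graph G on n ≥ 2 vertices (k ≥ 1) has product dimension at most ⌈8.317 · k · log₂ n⌉ + 1. -/
open scoped Classical

/-- Random proper colorings, built by adding one vertex at a time. -/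
theorem exists_random_coloring {V : Type*} [Fintype V] (G : SimpleGraph V) (k C : ℕ)
    (hC : 2 * k < C)
    (hdegen : ∀ s : Finset V, s.Nonempty →
      ∃ v ∈ s, (s.filter (fun u => G.Adj v u)).card ≤ k) :
    ∀ (m : ℕ) (s : Finset V), s.card = m →
      ∃ (Ω : Type) (_ : Fintype Ω) (w : Ω → ℝ) (φ : Ω → V → Fin C),
        (∀ ω, 0 ≤ w ω) ∧ (∑ ω, w ω = 1) ∧
        (∀ ω, ∀ u ∈ s, ∀ v ∈ s, G.Adj u v → φ ω u ≠ φ ω v) ∧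
        (∀ u ∈ s, ∀ v ∈ s, u ≠ v →
          (∑ ω, if φ ω u = φ ω v then w ω else 0) ≤ 1 / ((C : ℝ) - k)) ∧
        (∀ u ∈ s, ∀ v ∈ s, u ≠ v → ¬ G.Adj u v →
          1 / (C : ℝ) * (1 - k / ((C : ℝ) - k)) ≤ (∑ ω, if φ ω u = φ ω v then w ω else 0)) := by
  intro m
  induction m with
  | zero =>
    intro s hs
    rw [Finset.card_eq_zero] at hs
    subst hs
    refine ⟨Unit, inferInstance, fun _ => 1, fun _ _ => ⟨0, by omega⟩, ?_, ?_, ?_, ?_, ?_⟩ <;> simp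
  | succ m ih =>
    intro s hs
    obtain ⟨v, hv, hdeg⟩ := hdegen s (Finset.card_pos.mp (by omega))
    obtain ⟨Ω, fΩ, w, φ, hw0, hw1, hprop, hup, hlow⟩ := ih (s.erase v)
      (by rw [Finset.card_erase_of_mem hv]; omega)
    set N := s.filter (fun u => G.Adj v u) with hN
    have hCk : (0 : ℝ) < (C : ℝ) - k := by
      have : (2 * k : ℝ) < C := by exact_mod_cast hC
      have : (0 : ℝ) ≤ k := by positivity
      linarith
    have hC0 : (0 : ℝ) < C := by
      have : 0 < C := by omega
      exact_mod_cast this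
    let A : Ω → Finset (Fin C) := fun ω => Finset.univ \ N.image (φ ω)
    have hA1 : ∀ ω, (C : ℝ) - k ≤ (A ω).card := by
      intro ω
      have h1 : (A ω).card = C - (N.image (φ ω)).card := by
        simp only [A]
        rw [Finset.card_sdiff_of_subset (Finset.subset_univ _)]; simp
      have h2 : (N.image (φ ω)).card ≤ k := Finset.card_image_le.trans hdeg
      have h3 : C ≤ (A ω).card + k := by omega
      have : (C : ℝ) ≤ (A ω).card + k := by exact_mod_cast h3
      linarith
    have hA2 : ∀ ω, ((A ω).card : ℝ) ≤ C := by
      intro ω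
      have := Finset.card_le_univ (A ω)
      rw [Fintype.card_fin] at this
      exact_mod_cast this
    have hA0 : ∀ ω, (0 : ℝ) < (A ω).card := fun ω => lt_of_lt_of_le hCk (hA1 ω)
    -- probability of agreement with the new vertex
    have key : ∀ u, u ≠ v → (∑ x : (Σ ω, {c // c ∈ A ω}),
        if Function.update (φ x.1) v x.2.1 u = Function.update (φ x.1) v x.2.1 v
          then w x.1 / (A x.1).card else 0)
        = ∑ ω, if φ ω u ∈ A ω then w ω / (A ω).card else 0 := by
      intro u huv
      rw [Fintype.sum_sigma]
      refine Finset.sum_congr rfl fun ω _ => ?_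
      simp only [Function.update_self, Function.update_of_ne huv]
      rw [Finset.sum_coe_sort (A ω) (fun c => if φ ω u = c then w ω / (A ω).card else 0)]
      rw [Finset.sum_ite_eq]
    have old : ∀ a b, a ≠ v → b ≠ v → (∑ x : (Σ ω, {c // c ∈ A ω}),
        if Function.update (φ x.1) v x.2.1 a = Function.update (φ x.1) v x.2.1 b
          then w x.1 / (A x.1).card else 0)
        = ∑ ω, if φ ω a = φ ω b then w ω else 0 := by
      intro a b ha hb
      rw [Fintype.sum_sigma]
      refine Finset.sum_congr rfl fun ω _ => ?_
      simp only [Function.update_of_ne ha, Function.update_of_ne hb]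
      have := (hA0 ω).ne'
      split_ifs
      · simp
        field_simp
      · simp
    have kup : ∀ u, u ≠ v → (∑ x : (Σ ω, {c // c ∈ A ω}),
        if Function.update (φ x.1) v x.2.1 u = Function.update (φ x.1) v x.2.1 v
          then w x.1 / (A x.1).card else 0) ≤ 1 / ((C : ℝ) - k) := by
      intro u hu
      rw [key u hu, ← hw1, Finset.sum_div]
      refine Finset.sum_le_sum fun ω _ => ?_
      have h := div_le_div_of_nonneg_left (hw0 ω) hCk (hA1 ω)
      split_ifs
      · exact h
      · exact div_nonneg (hw0 ω) hCk.le
    have klow : ∀ u ∈ s, u ≠ v → ¬ G.Adj v u →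
        1 / (C : ℝ) * (1 - k / ((C : ℝ) - k)) ≤ (∑ x : (Σ ω, {c // c ∈ A ω}),
        if Function.update (φ x.1) v x.2.1 u = Function.update (φ x.1) v x.2.1 v
          then w x.1 / (A x.1).card else 0) := by
      intro u hus hu hadj
      rw [key u hu]
      have h1 : ∀ ω, 1 / (C : ℝ) * (w ω - ∑ x ∈ N, if φ ω u = φ ω x then w ω else 0) ≤
          if φ ω u ∈ A ω then w ω / (A ω).card else 0 := by
        intro ω
        have hnn : ∀ x ∈ N, 0 ≤ (if φ ω u = φ ω x then w ω else 0) := by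
          intro x _
          split_ifs
          · exact hw0 ω
          · exact le_rfl
        split_ifs with h
        · have h2 := div_le_div_of_nonneg_left (hw0 ω) (hA0 ω) (hA2 ω)
          refine le_trans ?_ h2
          rw [div_mul_eq_mul_div, one_mul]
          have := Finset.sum_nonneg hnn
          gcongr
          linarith
        · have : ∃ x ∈ N, φ ω x = φ ω u := by simpa [A] using h
          obtain ⟨x, hx, hxu⟩ := this
          have h3 := Finset.single_le_sum hnn hx
          rw [if_pos hxu.symm] at h3
          apply mul_nonpos_of_nonneg_of_nonpos
          · positivity
          · linarith
      refine le_trans ?_ (Finset.sum_le_sum fun ω _ => h1 ω)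
      rw [← Finset.mul_sum, Finset.sum_sub_distrib, hw1, Finset.sum_comm]
      have h4 : (∑ x ∈ N, ∑ ω, if φ ω u = φ ω x then w ω else 0) ≤ ∑ x ∈ N, 1 / ((C : ℝ) - k) := by
        refine Finset.sum_le_sum fun x hx => ?_
        have hx' := Finset.mem_filter.mp hx
        refine hup u (Finset.mem_erase.mpr ⟨hu, hus⟩) x
          (Finset.mem_erase.mpr ⟨hx'.2.ne', hx'.1⟩) ?_
        rintro rfl
        exact hadj hx'.2
      rw [Finset.sum_const, nsmul_eq_mul] at h4
      have h5 : (N.card : ℝ) * (1 / ((C : ℝ) - k)) ≤ k / ((C : ℝ) - k) := by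
        rw [mul_one_div]
        gcongr
      gcongr
      linarith
    refine ⟨(Σ ω, {c // c ∈ A ω}), inferInstance, fun x => w x.1 / (A x.1).card,
      fun x => Function.update (φ x.1) v x.2.1, ?_, ?_, ?_, ?_, ?_⟩
    · intro x
      exact div_nonneg (hw0 _) (hA0 _).le
    · rw [Fintype.sum_sigma, ← hw1]
      refine Finset.sum_congr rfl fun ω _ => ?_
      have := (hA0 ω).ne'
      simp
      field_simp
    · rintro ⟨ω, c, hc⟩ a ha b hb hab
      have hc' : ∀ x ∈ N, φ ω x ≠ c := by simpa [A] using hc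
      by_cases hav : a = v
      · subst hav
        simp only [Function.update_self, Function.update_of_ne hab.ne']
        exact (hc' b (Finset.mem_filter.mpr ⟨hb, hab⟩)).symm
      · by_cases hbv : b = v
        · subst hbv
          simp only [Function.update_self, Function.update_of_ne hab.ne]
          exact hc' a (Finset.mem_filter.mpr ⟨ha, hab.symm⟩)
        · simp only [Function.update_of_ne hav, Function.update_of_ne hbv]
          exact hprop ω a (Finset.mem_erase.mpr ⟨hav, ha⟩) b (Finset.mem_erase.mpr ⟨hbv, hb⟩) hab
    · intro a ha b hb hab
      by_cases hbv : b = v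
      · subst hbv
        exact kup a hab
      · by_cases hav : a = v
        · subst hav
          have := kup b hab.symm
          simp only [eq_comm] at this ⊢
          exact this
        · have := old a b hav hbv
          refine le_of_eq_of_le this ?_
          exact hup a (Finset.mem_erase.mpr ⟨hav, ha⟩) b (Finset.mem_erase.mpr ⟨hbv, hb⟩) hab
    · intro a ha b hb hab hadj
      by_cases hbv : b = v
      · subst hbv
        exact klow a ha hab (fun h => hadj h.symm)
      · by_cases hav : a = v
        · subst hav
          refine (klow b hb hab.symm hadj).trans_eq (Finset.sum_congr rfl fun x _ => ?_)
          exact if_congr eq_comm rfl rfl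
        · have := old a b hav hbv
          refine le_of_le_of_eq ?_ this.symm
          exact hlow a (Finset.mem_erase.mpr ⟨hav, ha⟩) b (Finset.mem_erase.mpr ⟨hbv, hb⟩) hab hadj

/-- One coloring which covers a `p`-fraction of the given pairs. -/
theorem exists_good_coloring {V : Type*} [Fintype V] (G : SimpleGraph V) (k C : ℕ)
    (hC : 2 * k < C)
    (hdegen : ∀ s : Finset V, s.Nonempty →
      ∃ v ∈ s, (s.filter (fun u => G.Adj v u)).card ≤ k)
    (P : Finset (V × V)) (hP : ∀ x ∈ P, x.1 ≠ x.2 ∧ ¬ G.Adj x.1 x.2) :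
    ∃ φ : V → Fin C, (∀ u v, G.Adj u v → φ u ≠ φ v) ∧
      ((P.filter (fun x => φ x.1 ≠ φ x.2)).card : ℝ) ≤
        (1 - 1 / (C : ℝ) * (1 - k / ((C : ℝ) - k))) * P.card := by
  obtain ⟨Ω, fΩ, w, φ, hw0, hw1, hprop, -, hlow⟩ :=
    exists_random_coloring G k C hC hdegen _ Finset.univ rfl
  set p : ℝ := 1 / (C : ℝ) * (1 - k / ((C : ℝ) - k)) with hp
  by_contra! hcon
  have h1 : ∀ ω, (1 - p) * P.card < ((P.filter (fun x => φ ω x.1 ≠ φ ω x.2)).card : ℝ) :=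
    fun ω => hcon (φ ω) fun u v h => hprop ω u (Finset.mem_univ _) v (Finset.mem_univ _) h
  have h2 : ∀ ω, ((P.filter (fun x => φ ω x.1 = φ ω x.2)).card : ℝ) < p * P.card := by
    intro ω
    have h := Finset.card_filter_add_card_filter_not (s := P) (fun x => φ ω x.1 = φ ω x.2)
    have h' : ((P.filter (fun x => φ ω x.1 = φ ω x.2)).card : ℝ) +
      (P.filter (fun x => φ ω x.1 ≠ φ ω x.2)).card = P.card := by exact_mod_cast h
    have := h1 ω
    linarith
  have h3 : p * P.card ≤ ∑ ω, w ω * ((P.filter (fun x => φ ω x.1 = φ ω x.2)).card : ℝ) := by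
    have : ∀ ω, w ω * ((P.filter (fun x => φ ω x.1 = φ ω x.2)).card : ℝ) =
        ∑ x ∈ P, if φ ω x.1 = φ ω x.2 then w ω else 0 := by
      intro ω
      rw [← Finset.sum_filter, Finset.sum_const, nsmul_eq_mul, mul_comm]
    simp only [this]
    rw [Finset.sum_comm]
    calc p * P.card = ∑ x ∈ P, p := by rw [Finset.sum_const, nsmul_eq_mul, mul_comm]
      _ ≤ _ := Finset.sum_le_sum fun x hx =>
        hlow x.1 (Finset.mem_univ _) x.2 (Finset.mem_univ _) (hP x hx).1 (hP x hx).2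
  have h4 : ∃ ω, 0 < w ω := by
    by_contra! h
    have : ∑ ω, w ω ≤ 0 := Finset.sum_nonpos fun ω _ => h ω
    linarith
  obtain ⟨ω₀, hω₀⟩ := h4
  have h5 : ∑ ω, w ω * ((P.filter (fun x => φ ω x.1 = φ ω x.2)).card : ℝ)
      < ∑ ω, w ω * (p * P.card) :=
    Finset.sum_lt_sum (fun ω _ => mul_le_mul_of_nonneg_left (h2 ω).le (hw0 ω))
      ⟨ω₀, Finset.mem_univ _, mul_lt_mul_of_pos_left (h2 ω₀) hω₀⟩
  rw [← Finset.sum_mul, hw1, one_mul] at h5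
  linarith

theorem exists_colorings {V : Type*} [Fintype V] (G : SimpleGraph V) (k C : ℕ)
    (hC : 2 * k < C)
    (hdegen : ∀ s : Finset V, s.Nonempty →
      ∃ v ∈ s, (s.filter (fun u => G.Adj v u)).card ≤ k)
    (P : Finset (V × V)) (hP : ∀ x ∈ P, x.1 ≠ x.2 ∧ ¬ G.Adj x.1 x.2)
    (hq : 0 ≤ (1 - 1 / (C : ℝ) * (1 - k / ((C : ℝ) - k)))) (l : ℕ) :
    ∃ φ : Fin l → V → Fin C, (∀ i u v, G.Adj u v → φ i u ≠ φ i v) ∧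
      ((P.filter (fun x => ∀ i, φ i x.1 ≠ φ i x.2)).card : ℝ) ≤
        (1 - 1 / (C : ℝ) * (1 - k / ((C : ℝ) - k))) ^ l * P.card := by
  induction l with
  | zero =>
    refine ⟨fun i => i.elim0, fun i => i.elim0, ?_⟩
    simp
  | succ l ih =>
    obtain ⟨φ, h1, h2⟩ := ih
    obtain ⟨ψ, h3, h4⟩ := exists_good_coloring G k C hC hdegen
      (P.filter (fun x => ∀ i, φ i x.1 ≠ φ i x.2))
      (fun x hx => hP x (Finset.mem_filter.mp hx).1)
    refine ⟨Fin.cons ψ φ, ?_, ?_⟩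
    · intro i
      refine Fin.cases ?_ (fun j => ?_) i
      · simpa using h3
      · simpa using h1 j
    · rw [Finset.filter_filter] at h4
      have : (P.filter (fun x => ∀ i, (Fin.cons ψ φ : Fin (l+1) → V → Fin C) i x.1 ≠
          (Fin.cons ψ φ : Fin (l+1) → V → Fin C) i x.2)) =
          P.filter (fun x => (∀ i, φ i x.1 ≠ φ i x.2) ∧ ψ x.1 ≠ ψ x.2) := by
        refine Finset.filter_congr fun x _ => ?_
        rw [Fin.forall_fin_succ]
        simp only [Fin.cons_zero, Fin.cons_succ]
        exact and_comm
      rw [this]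
      refine h4.trans ?_
      rw [pow_succ', mul_assoc]
      exact mul_le_mul_of_nonneg_left h2 hq

theorem pdim_le_of_bound {V : Type*} [Fintype V] (G : SimpleGraph V) (k C : ℕ)
    (hC : 2 * k < C)
    (hdegen : ∀ s : Finset V, s.Nonempty →
      ∃ v ∈ s, (s.filter (fun u => G.Adj v u)).card ≤ k)
    (hn : 2 ≤ Fintype.card V)
    (hq : 0 ≤ (1 - 1 / (C : ℝ) * (1 - k / ((C : ℝ) - k)))) (l : ℕ)
    (hl : (1 - 1 / (C : ℝ) * (1 - k / ((C : ℝ) - k))) ^ l * (Fintype.card V : ℝ) ^ 2 ≤ 1) :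
    pdim G ≤ l + 1 := by
  let P : Finset (V × V) := Finset.univ.filter (fun x => x.1 ≠ x.2 ∧ ¬ G.Adj x.1 x.2)
  obtain ⟨φ, h1, h2⟩ := exists_colorings G k C hC hdegen P
    (fun x hx => (Finset.mem_filter.mp hx).2) hq l
  have hPc : P.card < Fintype.card V ^ 2 := by
    have hV : Nonempty V := Fintype.card_pos_iff.mp (by omega)
    obtain ⟨a⟩ := hV
    rw [sq, ← Fintype.card_prod]
    apply Finset.card_lt_univ_of_notMem (x := (a, a))
    simp [P]
  have hempty : ∀ x ∈ P, ∃ i, φ i x.1 = φ i x.2 := by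
    have hcard : ((P.filter (fun x => ∀ i, φ i x.1 ≠ φ i x.2)).card : ℝ) < 1 := by
      refine lt_of_le_of_lt h2 ?_
      have hPc' : (P.card : ℝ) < (Fintype.card V : ℝ) ^ 2 := by exact_mod_cast hPc
      rcases (pow_nonneg hq l).eq_or_lt with h0 | h0
      · rw [← h0]; simp
      · exact lt_of_lt_of_le (mul_lt_mul_of_pos_left hPc' h0) hl
    have : (P.filter (fun x => ∀ i, φ i x.1 ≠ φ i x.2)).card < 1 := by exact_mod_cast hcard
    rw [Nat.lt_one_iff, Finset.card_eq_zero, Finset.filter_eq_empty_iff] at this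
    intro x hx
    have := this hx
    push Not at this
    exact this
  refine Nat.sInf_le ⟨fun u => Fin.cons (Fintype.equivFin V u : ℕ) (fun i => (φ i u : ℕ)), ?_, ?_⟩
  · intro u v huv
    have := congrFun huv 0
    simp only [Fin.cons_zero] at this
    exact (Fintype.equivFin V).injective (Fin.ext this)
  · intro u v huv
    rw [Fin.forall_fin_succ]
    simp only [Fin.cons_zero, Fin.cons_succ]
    constructor
    · intro h
      refine ⟨fun h' => huv ((Fintype.equivFin V).injective (Fin.ext h')), fun i h' => ?_⟩
      exact h1 i u v h (Fin.ext h')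
    · rintro ⟨-, h⟩
      by_contra hadj
      obtain ⟨i, hi⟩ := hempty (u, v) (Finset.mem_filter.mpr ⟨Finset.mem_univ _, huv, hadj⟩)
      exact h i (congrArg _ hi)

/-- Analytic part: if `1 - p ≤ exp (-a)` and `8.317 k a ≥ 2 log 2` then enough colorings. -/
theorem analytic_bound (n : ℝ) (hn : 2 ≤ n) (k q a : ℝ) (hq : 0 ≤ q)
    (ha0 : 0 ≤ a)
    (hqa : q ≤ Real.exp (-a)) (ha : 2 * Real.log 2 ≤ 8.317 * k * a) :
    q ^ ⌈8.317 * k * Real.logb 2 n⌉₊ * n ^ 2 ≤ 1 := by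
  set l := ⌈8.317 * k * Real.logb 2 n⌉₊
  have hl : 8.317 * k * Real.logb 2 n ≤ l := Nat.le_ceil _
  have hn0 : 0 < n := by linarith
  have hlog : Real.logb 2 n * Real.log 2 = Real.log n := by
    rw [Real.logb, div_mul_cancel₀]
    exact (Real.log_pos (by norm_num)).ne'
  have hb : 0 ≤ Real.logb 2 n := Real.logb_nonneg (by norm_num) (by linarith)
  have h1 : 2 * Real.log n ≤ l * a := by
    calc 2 * Real.log n = Real.logb 2 n * (2 * Real.log 2) := by rw [← hlog]; ring
      _ ≤ Real.logb 2 n * (8.317 * k * a) := by gcongr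
      _ = (8.317 * k * Real.logb 2 n) * a := by ring
      _ ≤ l * a := by gcongr
  have h2 : n ^ 2 = Real.exp (2 * Real.log n) := by
    rw [two_mul, Real.exp_add, Real.exp_log hn0, sq]
  calc q ^ l * n ^ 2 ≤ Real.exp (-a) ^ l * Real.exp (l * a) := by
        rw [h2]; gcongr
    _ = 1 := by
        rw [← Real.exp_nat_mul, ← Real.exp_add]
        simp

/-- Every `k`-degenerate graph on `n ≥ 2` vertices (`k ≥ 1`) has product
dimension at most `⌈8.317 k log₂ n⌉ + 1`.  (`k`-degenerate: every nonempty subgraph has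
a vertex of degree at most `k`.) -/
theorem pdim_degenerate {V : Type*} [Fintype V] (G : SimpleGraph V) (k : ℕ)
    (hk : 1 ≤ k)
    (hdegen : ∀ s : Finset V, s.Nonempty →
      ∃ v ∈ s, (s.filter (fun u => G.Adj v u)).card ≤ k)
    (hn : 2 ≤ Fintype.card V) :
    pdim G ≤ ⌈8.317 * k * Real.logb 2 (Fintype.card V)⌉₊ + 1 := by
  have hn' : (2 : ℝ) ≤ Fintype.card V := by exact_mod_cast hn
  rcases hk.eq_or_lt with rfl | hk2
  · have hq : 0 ≤ (1 - 1 / ((3 : ℕ) : ℝ) * (1 - (1 : ℕ) / (((3 : ℕ) : ℝ) - (1 : ℕ)))) := by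
      norm_num
    refine pdim_le_of_bound G 1 3 (by norm_num) hdegen hn hq _ ?_
    refine analytic_bound _ hn' _ _ (Real.log 2 / 4) hq ?_ ?_ ?_
    · have := Real.log_pos (show (1 : ℝ) < 2 by norm_num)
      positivity
    · have h1 : Real.log 2 ≤ 4 * Real.log (6 / 5) := by
        have : 4 * Real.log (6 / 5) = Real.log ((6 / 5) ^ 4) := by rw [Real.log_pow]; norm_num
        rw [this]
        exact Real.log_le_log (by norm_num) (by norm_num)
      have h2 : Real.exp (- Real.log (6 / 5)) = 5 / 6 := by
        rw [Real.exp_neg, Real.exp_log (by norm_num)]; norm_num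
      calc _ = (5 / 6 : ℝ) := by norm_num
        _ = Real.exp (- Real.log (6 / 5)) := h2.symm
        _ ≤ _ := Real.exp_le_exp.mpr (by linarith)
    · have := Real.log_pos (show (1 : ℝ) < 2 by norm_num)
      norm_num
      linarith
  · obtain ⟨x, hx⟩ : ∃ x, x = k / 2 := ⟨_, rfl⟩
    have hx1 : (k : ℝ) ≤ 3 * x := by
      have : k ≤ 3 * x := by omega
      exact_mod_cast this
    have hx2 : 2 * (x : ℝ) ≤ k := by
      have : 2 * x ≤ k := by omega
      exact_mod_cast this
    have hk0 : (2 : ℝ) ≤ k := by exact_mod_cast hk2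
    have hCc : ((3 * k + x : ℕ) : ℝ) = 3 * k + x := by push_cast; ring
    have hp : 1 / ((3 * k + x : ℕ) : ℝ) * (1 - k / (((3 * k + x : ℕ) : ℝ) - k)) =
        (k + x) / ((3 * k + x) * (2 * k + x)) := by
      rw [hCc]
      have h1 : (3 * k + x : ℝ) ≠ 0 := by positivity
      have h2 : (2 * k + x : ℝ) ≠ 0 := by positivity
      have h3 : (3 * k + x - k : ℝ) = 2 * k + x := by ring
      rw [h3]
      field_simp
      ring
    have hp1 : (k + x) / ((3 * k + x) * (2 * k + x)) ≤ (1 : ℝ) := by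
      rw [div_le_one (by positivity)]
      nlinarith
    have hp2 : 1 / (5.9 * k) ≤ (k + x : ℝ) / ((3 * k + x) * (2 * k + x)) := by
      rw [div_le_div_iff₀ (by positivity) (by positivity)]
      nlinarith
    have hq : 0 ≤ (1 - 1 / ((3 * k + x : ℕ) : ℝ) * (1 - k / (((3 * k + x : ℕ) : ℝ) - k))) := by
      rw [hp]; linarith
    refine pdim_le_of_bound G k (3 * k + x) (by omega) hdegen hn hq _ ?_
    refine analytic_bound _ hn' _ _ (1 / (5.9 * k)) hq (by positivity) ?_ ?_
    · rw [hp]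
      have := Real.add_one_le_exp (-(1 / (5.9 * k : ℝ)))
      linarith
    · have h := Real.log_two_lt_d9
      have : 8.317 * (k : ℝ) * (1 / (5.9 * k)) = 8.317 / 5.9 := by
        field_simp
      rw [this]
      norm_num at h ⊢
      linarith
end
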